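/- arXiv:2107.07454 — 7 statements merged into one kernel-verified Lean document; each statement's English description precedes it below -/
import Mathlib

section
/- Let Ω ⊆ ℝ² be open and let u, v, w : Ω → ℝ be three times continuously differentiable, satisfying at each point of Ω the three η²-effective inextensibility constraints u_x = −(1/2)w_x², v_y = −(1/2)w_y², and u_y + v_x = −w_x w_y. Then at every point of Ω one has w_xx·w_yy = (w_xy)²; i.e., the Gaussian-curvature-type expression w_xx w_yy − w_xy² of the transverse deflection vanishes identically. -/
/-- Partial derivative in the first (span-wise, `x`) variable. -/
noncomputable def pdx (f : ℝ → ℝ → ℝ) (x y : ℝ) : ℝ := deriv (fun x' => f x' y) x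

/-- Partial derivative in the second (chord-wise, `y`) variable. -/
noncomputable def pdy (f : ℝ → ℝ → ℝ) (x y : ℝ) : ℝ := deriv (fun y' => f x y') y

/-- Auxiliary: joint regularity. -/
def CD (Ω : Set (ℝ × ℝ)) (n : ℕ) (f : ℝ → ℝ → ℝ) : Prop :=
  ContDiffOn ℝ n (fun q : ℝ × ℝ => f q.1 q.2) Ω

/-- Auxiliary: equality on a set. -/
def EqΩ (Ω : Set (ℝ × ℝ)) (f g : ℝ → ℝ → ℝ) : Prop := ∀ p ∈ Ω, f p.1 p.2 = g p.1 p.2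

section aux
variable {Ω : Set (ℝ × ℝ)}

lemma slice_x {f : ℝ → ℝ → ℝ} {p : ℝ × ℝ}
    (h : DifferentiableAt ℝ (fun q : ℝ × ℝ => f q.1 q.2) p) :
    HasDerivAt (fun x' => f x' p.2) (fderiv ℝ (fun q : ℝ × ℝ => f q.1 q.2) p (1, 0)) p.1 := by
  have h1 : HasDerivAt (fun x' : ℝ => (x', p.2)) ((1 : ℝ), (0 : ℝ)) p.1 :=
    (hasDerivAt_id p.1).prodMk (hasDerivAt_const p.1 p.2)
  exact HasFDerivAt.comp_hasDerivAt (f := fun x' : ℝ => (x', p.2)) p.1 h.hasFDerivAt h1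

lemma slice_y {f : ℝ → ℝ → ℝ} {p : ℝ × ℝ}
    (h : DifferentiableAt ℝ (fun q : ℝ × ℝ => f q.1 q.2) p) :
    HasDerivAt (fun y' => f p.1 y') (fderiv ℝ (fun q : ℝ × ℝ => f q.1 q.2) p (0, 1)) p.2 := by
  have h1 : HasDerivAt (fun y' : ℝ => (p.1, y')) ((0 : ℝ), (1 : ℝ)) p.2 :=
    (hasDerivAt_const p.2 p.1).prodMk (hasDerivAt_id p.2)
  exact HasFDerivAt.comp_hasDerivAt (f := fun y' : ℝ => (p.1, y')) p.2 h.hasFDerivAt h1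

lemma CD.diff {n : ℕ} {f : ℝ → ℝ → ℝ} (hΩ : IsOpen Ω) (h : CD Ω (n + 1) f) {p : ℝ × ℝ}
    (hp : p ∈ Ω) : DifferentiableAt ℝ (fun q : ℝ × ℝ => f q.1 q.2) p :=
  (h.contDiffAt (hΩ.mem_nhds hp)).differentiableAt (by norm_cast)

lemma CD.hx {n : ℕ} {f : ℝ → ℝ → ℝ} (hΩ : IsOpen Ω) (h : CD Ω (n + 1) f) {p : ℝ × ℝ}
    (hp : p ∈ Ω) : HasDerivAt (fun x' => f x' p.2) (pdx f p.1 p.2) p.1 :=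
  (slice_x (h.diff hΩ hp)).differentiableAt.hasDerivAt

lemma CD.hy {n : ℕ} {f : ℝ → ℝ → ℝ} (hΩ : IsOpen Ω) (h : CD Ω (n + 1) f) {p : ℝ × ℝ}
    (hp : p ∈ Ω) : HasDerivAt (fun y' => f p.1 y') (pdy f p.1 p.2) p.2 :=
  (slice_y (h.diff hΩ hp)).differentiableAt.hasDerivAt

lemma CD.pdx {n : ℕ} {f : ℝ → ℝ → ℝ} (hΩ : IsOpen Ω) (h : CD Ω (n + 1) f) :
    CD Ω n (pdx f) := by
  have h1 : ContDiffOn ℝ n (fderiv ℝ (fun q : ℝ × ℝ => f q.1 q.2)) Ω :=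
    ContDiffOn.fderiv_of_isOpen h hΩ (by norm_cast)
  refine (h1.clm_apply (contDiffOn_const (c := ((1 : ℝ), (0 : ℝ))))).congr ?_
  intro p hp
  exact (slice_x (h.diff hΩ hp)).deriv

lemma CD.pdy {n : ℕ} {f : ℝ → ℝ → ℝ} (hΩ : IsOpen Ω) (h : CD Ω (n + 1) f) :
    CD Ω n (pdy f) := by
  have h1 : ContDiffOn ℝ n (fderiv ℝ (fun q : ℝ × ℝ => f q.1 q.2)) Ω :=
    ContDiffOn.fderiv_of_isOpen h hΩ (by norm_cast)
  refine (h1.clm_apply (contDiffOn_const (c := ((0 : ℝ), (1 : ℝ))))).congr ?_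
  intro p hp
  exact (slice_y (h.diff hΩ hp)).deriv

lemma EqΩ.pdx {f g : ℝ → ℝ → ℝ} (hΩ : IsOpen Ω) (h : EqΩ Ω f g) : EqΩ Ω (pdx f) (pdx g) := by
  intro p hp
  apply Filter.EventuallyEq.deriv_eq
  have hc : ContinuousAt (fun x' : ℝ => (x', p.2)) p.1 := by fun_prop
  filter_upwards [hc.preimage_mem_nhds (hΩ.mem_nhds hp)] with x hx
  exact h (x, p.2) hx

lemma EqΩ.pdy {f g : ℝ → ℝ → ℝ} (hΩ : IsOpen Ω) (h : EqΩ Ω f g) : EqΩ Ω (pdy f) (pdy g) := by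
  intro p hp
  apply Filter.EventuallyEq.deriv_eq
  have hc : ContinuousAt (fun y' : ℝ => (p.1, y')) p.2 := by fun_prop
  filter_upwards [hc.preimage_mem_nhds (hΩ.mem_nhds hp)] with x hx
  exact h (p.1, x) hx

lemma CD.swap {n : ℕ} {f : ℝ → ℝ → ℝ} (hΩ : IsOpen Ω) (h : CD Ω (n + 1 + 1) f) :
    EqΩ Ω (_root_.pdy (_root_.pdx f)) (_root_.pdx (_root_.pdy f)) := by
  intro p hp
  set F := fun q : ℝ × ℝ => f q.1 q.2 with hF
  have h1 : ContDiffOn ℝ (n + 1 : ℕ) (fderiv ℝ F) Ω :=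
    ContDiffOn.fderiv_of_isOpen h hΩ (by norm_cast)
  have hd : DifferentiableAt ℝ (fderiv ℝ F) p :=
    (h1.contDiffAt (hΩ.mem_nhds hp)).differentiableAt (by norm_cast)
  have hsym : IsSymmSndFDerivAt ℝ F p := by
    apply (h.contDiffAt (hΩ.mem_nhds hp)).isSymmSndFDerivAt
    simp only [minSmoothness_of_isRCLikeNormedField]
    norm_cast
    omega
  have ex : EqΩ Ω (_root_.pdx f) (fun x y => fderiv ℝ F (x, y) (1, 0)) := fun q hq =>
    (slice_x (h.diff hΩ hq)).deriv
  have ey : EqΩ Ω (_root_.pdy f) (fun x y => fderiv ℝ F (x, y) (0, 1)) := fun q hq =>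
    (slice_y (h.diff hΩ hq)).deriv
  rw [ex.pdy hΩ p hp, ey.pdx hΩ p hp]
  have ax : HasFDerivAt (fun q : ℝ × ℝ => fderiv ℝ F q (1, 0))
      ((fderiv ℝ (fderiv ℝ F) p).flip (1, 0)) p := by
    simpa using hd.hasFDerivAt.clm_apply (hasFDerivAt_const ((1 : ℝ), (0 : ℝ)) p)
  have ay : HasFDerivAt (fun q : ℝ × ℝ => fderiv ℝ F q (0, 1))
      ((fderiv ℝ (fderiv ℝ F) p).flip (0, 1)) p := by
    simpa using hd.hasFDerivAt.clm_apply (hasFDerivAt_const ((0 : ℝ), (1 : ℝ)) p)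
  have bx := (slice_y (f := fun x y => fderiv ℝ F (x, y) (1, 0)) ax.differentiableAt).deriv
  have by' := (slice_x (f := fun x y => fderiv ℝ F (x, y) (0, 1)) ay.differentiableAt).deriv
  refine bx.trans (Eq.trans ?_ by'.symm)
  have e1 := ax.fderiv
  have e2 := ay.fderiv
  simp only [Prod.mk.eta] at e1 e2 ⊢
  rw [e1, e2]
  simpa using hsym.eq (0, 1) (1, 0)

end aux

/-- The three η²-effective inextensibility constraints force the
Gaussian-curvature-type quantity of the transverse deflection to vanish:
`wₓₓ w_yy = (wₓ_y)²`. -/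
theorem gaussian_curvature_vanishes
    (Ω : Set (ℝ × ℝ)) (hΩ : IsOpen Ω) (u v w : ℝ → ℝ → ℝ)
    (hu : ContDiffOn ℝ 3 (fun q : ℝ × ℝ => u q.1 q.2) Ω)
    (hv : ContDiffOn ℝ 3 (fun q : ℝ × ℝ => v q.1 q.2) Ω)
    (hw : ContDiffOn ℝ 3 (fun q : ℝ × ℝ => w q.1 q.2) Ω)
    (hc1 : ∀ p ∈ Ω, pdx u p.1 p.2 = -(1 / 2) * (pdx w p.1 p.2) ^ 2)
    (hc2 : ∀ p ∈ Ω, pdy v p.1 p.2 = -(1 / 2) * (pdy w p.1 p.2) ^ 2)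
    (hc3 : ∀ p ∈ Ω, pdy u p.1 p.2 + pdx v p.1 p.2
        = -(pdx w p.1 p.2) * pdy w p.1 p.2) :
    ∀ p ∈ Ω,
      pdx (pdx w) p.1 p.2 * pdy (pdy w) p.1 p.2 = (pdy (pdx w) p.1 p.2) ^ 2 := by
  have U : CD Ω 3 u := hu
  have V : CD Ω 3 v := hv
  have W : CD Ω 3 w := hw
  have Wx := W.pdx hΩ
  have Wy := W.pdy hΩ
  have Wxx := Wx.pdx hΩ
  have Wxy := Wx.pdy hΩ
  have Wyx := Wy.pdx hΩ
  have A1 : EqΩ Ω (pdy (pdx u)) (fun x y => -(pdx w x y * pdy (pdx w) x y)) := by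
    intro p hp
    rw [EqΩ.pdy (g := fun x y => -(1 / 2) * (pdx w x y) ^ 2) hΩ hc1 p hp]
    refine (((Wx.hy hΩ hp).pow 2).const_mul (-(1 / 2) : ℝ)).deriv.trans ?_
    norm_num
    ring
  have A2 : EqΩ Ω (pdx (pdy v)) (fun x y => -(pdy w x y * pdx (pdy w) x y)) := by
    intro p hp
    rw [EqΩ.pdx (g := fun x y => -(1 / 2) * (pdy w x y) ^ 2) hΩ hc2 p hp]
    refine (((Wy.hx hΩ hp).pow 2).const_mul (-(1 / 2) : ℝ)).deriv.trans ?_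
    norm_num
    ring
  have A3 : EqΩ Ω (fun x y => pdx (pdy u) x y + pdx (pdx v) x y)
      (fun x y => -(pdx (pdx w) x y * pdy w x y + pdx w x y * pdx (pdy w) x y)) := by
    intro p hp
    have h := EqΩ.pdx (f := fun x y => pdy u x y + pdx v x y)
      (g := fun x y => -(pdx w x y) * pdy w x y) hΩ hc3 p hp
    have l := (((U.pdy hΩ).hx hΩ hp).add ((V.pdx hΩ).hx hΩ hp)).deriv
    have r := (((Wx.hx hΩ hp).neg).mul (Wy.hx hΩ hp)).deriv
    have h' := l.symm.trans (h.trans r)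
    simp only [Pi.neg_apply] at h'
    linarith
  intro p hp
  have B1 := (A1.pdy hΩ p hp).trans (((Wx.hy hΩ hp).mul (Wxy.hy hΩ hp)).neg).deriv
  have B2 := (A2.pdx hΩ p hp).trans (((Wy.hx hΩ hp).mul (Wyx.hx hΩ hp)).neg).deriv
  have B3 := ((((U.pdy hΩ).pdx hΩ).hy hΩ hp).add (((V.pdx hΩ).pdx hΩ).hy hΩ hp)).deriv.symm.trans
    ((A3.pdy hΩ p hp).trans
    (((Wxx.hy hΩ hp).mul (Wy.hy hΩ hp)).add ((Wx.hy hΩ hp).mul (Wyx.hy hΩ hp))).neg.deriv)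
  have C1 := (U.swap hΩ).pdy hΩ p hp
  have C2 := (V.pdx hΩ).swap hΩ p hp
  have C3 := (V.swap hΩ).pdx hΩ p hp
  have C4 := Wx.swap hΩ p hp
  have C5 := (W.swap hΩ).pdx hΩ p hp
  have C6 := (W.swap hΩ).pdy hΩ p hp
  have C7 := W.swap hΩ p hp
  rw [← C1, C2, C3, B1, B2, C4, C5, ← C6, ← C7] at B3
  linarith
end

section
/- Let L_x, L_y > 0 and let w : ℝ² → ℝ be three times continuously differentiable on a neighborhood of the closed rectangle [0, L_x] × [0, L_y]. Then ∫₀^{L_x}∫₀^{L_y} ( w_xx·w_yy − w_xy² ) dy dx = ∫₀^{L_y} [ w_x(L_x, y)·w_yy(L_x, y) − w_x(0, y)·w_yy(0, y) ] dy − ∫₀^{L_x} [ w_x(x, L_y)·w_xy(x, L_y) − w_x(x, 0)·w_xy(x, 0) ] dx. -/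
lemma pdx_eq_fderiv {f : ℝ → ℝ → ℝ} {q : ℝ × ℝ}
    (h : DifferentiableAt ℝ (fun q : ℝ × ℝ => f q.1 q.2) q) :
    pdx f q.1 q.2 = fderiv ℝ (fun q : ℝ × ℝ => f q.1 q.2) q (1, 0) := by
  have h1 : HasDerivAt (fun x' : ℝ => (x', q.2)) ((1 : ℝ), (0 : ℝ)) q.1 :=
    (hasDerivAt_id q.1).prodMk (hasDerivAt_const q.1 q.2)
  have h2 : HasFDerivAt (fun q : ℝ × ℝ => f q.1 q.2)
    (fderiv ℝ (fun q : ℝ × ℝ => f q.1 q.2) q) ((fun x' : ℝ => (x', q.2)) q.1) := h.hasFDerivAt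
  exact (h2.comp_hasDerivAt q.1 h1).deriv

lemma pdy_eq_fderiv {f : ℝ → ℝ → ℝ} {q : ℝ × ℝ}
    (h : DifferentiableAt ℝ (fun q : ℝ × ℝ => f q.1 q.2) q) :
    pdy f q.1 q.2 = fderiv ℝ (fun q : ℝ × ℝ => f q.1 q.2) q (0, 1) := by
  have h1 : HasDerivAt (fun y' : ℝ => (q.1, y')) ((0 : ℝ), (1 : ℝ)) q.2 :=
    (hasDerivAt_const q.2 q.1).prodMk (hasDerivAt_id q.2)
  have h2 : HasFDerivAt (fun q : ℝ × ℝ => f q.1 q.2)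
    (fderiv ℝ (fun q : ℝ × ℝ => f q.1 q.2) q) ((fun y' : ℝ => (q.1, y')) q.2) := h.hasFDerivAt
  exact (h2.comp_hasDerivAt q.2 h1).deriv

lemma diffAt_of {f : ℝ → ℝ → ℝ} {U : Set (ℝ × ℝ)} (hU : IsOpen U) {n : WithTop ℕ∞}
    (hf : ContDiffOn ℝ n (fun q : ℝ × ℝ => f q.1 q.2) U) (hn : n ≠ 0) {q : ℝ × ℝ} (hq : q ∈ U) :
    DifferentiableAt ℝ (fun q : ℝ × ℝ => f q.1 q.2) q :=
  (hf.contDiffAt (hU.mem_nhds hq)).differentiableAt hn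

lemma contDiffOn_pdx {f : ℝ → ℝ → ℝ} {U : Set (ℝ × ℝ)} (hU : IsOpen U) {m n : WithTop ℕ∞}
    (hf : ContDiffOn ℝ n (fun q : ℝ × ℝ => f q.1 q.2) U) (hn : n ≠ 0) (hm : m + 1 ≤ n) :
    ContDiffOn ℝ m (fun q : ℝ × ℝ => pdx f q.1 q.2) U :=
  ((hf.fderiv_of_isOpen hU hm).clm_apply contDiffOn_const).congr
    fun _ hq => pdx_eq_fderiv (diffAt_of hU hf hn hq)

lemma contDiffOn_pdy {f : ℝ → ℝ → ℝ} {U : Set (ℝ × ℝ)} (hU : IsOpen U) {m n : WithTop ℕ∞}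
    (hf : ContDiffOn ℝ n (fun q : ℝ × ℝ => f q.1 q.2) U) (hn : n ≠ 0) (hm : m + 1 ≤ n) :
    ContDiffOn ℝ m (fun q : ℝ × ℝ => pdy f q.1 q.2) U :=
  ((hf.fderiv_of_isOpen hU hm).clm_apply contDiffOn_const).congr
    fun _ hq => pdy_eq_fderiv (diffAt_of hU hf hn hq)

lemma pd_comm {f : ℝ → ℝ → ℝ} {U : Set (ℝ × ℝ)} (hU : IsOpen U)
    (hf : ContDiffOn ℝ 2 (fun q : ℝ × ℝ => f q.1 q.2) U) {q : ℝ × ℝ} (hq : q ∈ U) :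
    pdx (pdy f) q.1 q.2 = pdy (pdx f) q.1 q.2 := by
  have two : (2 : WithTop ℕ∞) ≠ 0 := by norm_num
  have le2 : (1 : WithTop ℕ∞) + 1 ≤ 2 := by norm_num
  rw [pdx_eq_fderiv (diffAt_of hU (contDiffOn_pdy hU hf two le2) one_ne_zero hq),
    pdy_eq_fderiv (diffAt_of hU (contDiffOn_pdx hU hf two le2) one_ne_zero hq)]
  have e1 : (fun q : ℝ × ℝ => pdy f q.1 q.2) =ᶠ[nhds q]
      fun p => fderiv ℝ (fun q : ℝ × ℝ => f q.1 q.2) p (0, 1) := by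
    filter_upwards [hU.mem_nhds hq] with p hp using pdy_eq_fderiv (diffAt_of hU hf two hp)
  have e2 : (fun q : ℝ × ℝ => pdx f q.1 q.2) =ᶠ[nhds q]
      fun p => fderiv ℝ (fun q : ℝ × ℝ => f q.1 q.2) p (1, 0) := by
    filter_upwards [hU.mem_nhds hq] with p hp using pdx_eq_fderiv (diffAt_of hU hf two hp)
  have hd : DifferentiableAt ℝ (fderiv ℝ (fun q : ℝ × ℝ => f q.1 q.2)) q :=
    ((hf.fderiv_of_isOpen hU le2).contDiffAt (hU.mem_nhds hq)).differentiableAt one_ne_zero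
  rw [e1.fderiv_eq, e2.fderiv_eq, fderiv_clm_apply hd (differentiableAt_const _),
    fderiv_clm_apply hd (differentiableAt_const _)]
  have := (hf.contDiffAt (hU.mem_nhds hq)).isSymmSndFDerivAt (by simp)
  simpa using this (1, 0) (0, 1)

/-- Integration-by-parts identity on the rectangle relating
`∫∫ (wₓₓ w_yy − wₓy²)` to the boundary terms `[wₓ w_yy]` on the east/west edges
and `[wₓ wₓy]` on the north/south edges. -/
theorem rectangle_integration_by_parts
    (Lx Ly : ℝ) (hLx : 0 < Lx) (hLy : 0 < Ly)
    (w : ℝ → ℝ → ℝ) (U : Set (ℝ × ℝ)) (hU : IsOpen U)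
    (hsub : Set.Icc (0 : ℝ) Lx ×ˢ Set.Icc (0 : ℝ) Ly ⊆ U)
    (hw : ContDiffOn ℝ 3 (fun q : ℝ × ℝ => w q.1 q.2) U) :
    (∫ x in (0 : ℝ)..Lx, ∫ y in (0 : ℝ)..Ly,
        (pdx (pdx w) x y * pdy (pdy w) x y - (pdy (pdx w) x y) ^ 2))
      = (∫ y in (0 : ℝ)..Ly,
          (pdx w Lx y * pdy (pdy w) Lx y - pdx w 0 y * pdy (pdy w) 0 y))
        - ∫ x in (0 : ℝ)..Lx,
            (pdx w x Ly * pdy (pdx w) x Ly - pdx w x 0 * pdy (pdx w) x 0) := by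
  have n3 : (3 : WithTop ℕ∞) ≠ 0 := by norm_num
  have n2 : (2 : WithTop ℕ∞) ≠ 0 := by norm_num
  have l3 : (2 : WithTop ℕ∞) + 1 ≤ 3 := by norm_num
  have l2 : (1 : WithTop ℕ∞) + 1 ≤ 2 := by norm_num
  have cx := contDiffOn_pdx hU hw n3 l3
  have cy := contDiffOn_pdy hU hw n3 l3
  have cxx := contDiffOn_pdx hU cx n2 l2
  have cxy := contDiffOn_pdy hU cx n2 l2
  have cyy := contDiffOn_pdy hU cy n2 l2
  have third : ∀ q ∈ U, pdx (pdy (pdy w)) q.1 q.2 = pdy (pdy (pdx w)) q.1 q.2 := by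
    intro q hq
    rw [pd_comm hU cy hq]
    have cyx := contDiffOn_pdx hU cy n2 l2
    rw [pdy_eq_fderiv (diffAt_of hU cyx one_ne_zero hq),
      pdy_eq_fderiv (diffAt_of hU cxy one_ne_zero hq)]
    have e : (fun q : ℝ × ℝ => pdx (pdy w) q.1 q.2) =ᶠ[nhds q]
        fun q => pdy (pdx w) q.1 q.2 := by
      filter_upwards [hU.mem_nhds hq] with p hp
        using pd_comm hU (hw.of_le (by norm_num)) hp
    rw [e.fderiv_eq]
  let f : ℝ × ℝ → ℝ := fun q => pdx w q.1 q.2 * pdy (pdy w) q.1 q.2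
  let g : ℝ × ℝ → ℝ := fun q => - (pdx w q.1 q.2 * pdy (pdx w) q.1 q.2)
  have cf : ContDiffOn ℝ 1 f U := (cx.of_le (by norm_num)).mul cyy
  have cg : ContDiffOn ℝ 1 g U := ((cx.of_le (by norm_num)).mul cxy).neg
  have key : ∀ q ∈ U, fderiv ℝ f q (1, 0) + fderiv ℝ g q (0, 1) =
      pdx (pdx w) q.1 q.2 * pdy (pdy w) q.1 q.2 - (pdy (pdx w) q.1 q.2) ^ 2 := by
    intro q hq
    have dx := diffAt_of hU cx n2 hq
    have dxy := diffAt_of hU cxy one_ne_zero hq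
    have dyy := diffAt_of hU cyy one_ne_zero hq
    have hf := (dx.hasFDerivAt.mul dyy.hasFDerivAt).fderiv
    have hg := (dx.hasFDerivAt.mul dxy.hasFDerivAt).neg.fderiv
    have hf' : fderiv ℝ f q = _ := hf
    have hg' : fderiv ℝ g q = _ := hg
    rw [hf', hg']
    simp only [ContinuousLinearMap.add_apply, ContinuousLinearMap.smul_apply,
      ContinuousLinearMap.neg_apply, smul_eq_mul, ← pdx_eq_fderiv dx, ← pdy_eq_fderiv dx,
      ← pdx_eq_fderiv dyy, ← pdy_eq_fderiv dxy, third q hq]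
    ring
  have hsub' : Set.uIcc (0 : ℝ) Lx ×ˢ Set.uIcc (0 : ℝ) Ly ⊆ U := by
    rwa [Set.uIcc_of_le hLx.le, Set.uIcc_of_le hLy.le]
  have hIoo : ∀ q ∈ Set.Ioo (min 0 Lx) (max 0 Lx) ×ˢ Set.Ioo (min 0 Ly) (max 0 Ly), q ∈ U :=
    fun q hq => hsub' ⟨Set.Ioo_subset_Icc_self hq.1, Set.Ioo_subset_Icc_self hq.2⟩
  have main := MeasureTheory.integral2_divergence_prod_of_hasFDerivAt f g
    (fderiv ℝ f) (fderiv ℝ g) 0 0 Lx Ly (cf.continuousOn.mono hsub') (cg.continuousOn.mono hsub')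
    (fun q hq => ((cf.contDiffAt (hU.mem_nhds (hIoo q hq))).differentiableAt
      one_ne_zero).hasFDerivAt)
    (fun q hq => ((cg.contDiffAt (hU.mem_nhds (hIoo q hq))).differentiableAt
      one_ne_zero).hasFDerivAt)
    (by
      apply ContinuousOn.integrableOn_compact (isCompact_uIcc.prod isCompact_uIcc)
      refine ContinuousOn.mono ?_ hsub'
      exact ((cf.continuousOn_fderiv_of_isOpen hU le_rfl).clm_apply continuousOn_const).add
        ((cg.continuousOn_fderiv_of_isOpen hU le_rfl).clm_apply continuousOn_const))
  have hL : (∫ x in (0 : ℝ)..Lx, ∫ y in (0 : ℝ)..Ly,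
        (pdx (pdx w) x y * pdy (pdy w) x y - (pdy (pdx w) x y) ^ 2)) =
      ∫ x in (0 : ℝ)..Lx, ∫ y in (0 : ℝ)..Ly,
        fderiv ℝ f (x, y) (1, 0) + fderiv ℝ g (x, y) (0, 1) := by
    refine intervalIntegral.integral_congr fun x hx => ?_
    refine intervalIntegral.integral_congr fun y hy => ?_
    exact (key (x, y) (hsub' ⟨hx, hy⟩)).symm
  have ix : ∀ F : ℝ × ℝ → ℝ, ContDiffOn ℝ 1 F U → ∀ y ∈ Set.uIcc 0 Ly,
      IntervalIntegrable (fun x => F (x, y)) MeasureTheory.volume 0 Lx := fun F hF y hy =>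
    (hF.continuousOn.comp (by fun_prop) (fun x hx => hsub' ⟨hx, hy⟩)).intervalIntegrable
  have iy : ∀ F : ℝ × ℝ → ℝ, ContDiffOn ℝ 1 F U → ∀ x ∈ Set.uIcc 0 Lx,
      IntervalIntegrable (fun y => F (x, y)) MeasureTheory.volume 0 Ly := fun F hF x hx =>
    (hF.continuousOn.comp (by fun_prop) (fun y hy => hsub' ⟨hx, hy⟩)).intervalIntegrable
  have e1 := intervalIntegral.integral_sub (iy f cf Lx Set.right_mem_uIcc)
    (iy f cf 0 Set.left_mem_uIcc)
  have e2 := intervalIntegral.integral_sub (ix g cg 0 Set.left_mem_uIcc)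
    (ix g cg Ly Set.right_mem_uIcc)
  have e3 : (∫ x in (0 : ℝ)..Lx,
      (pdx w x Ly * pdy (pdx w) x Ly - pdx w x 0 * pdy (pdx w) x 0)) =
      ∫ x in (0 : ℝ)..Lx, (g (x, 0) - g (x, Ly)) := by
    refine intervalIntegral.integral_congr fun x _ => ?_
    simp only [g]
    ring
  rw [hL, main, e3, e2]
  change _ = (∫ y in (0 : ℝ)..Ly, (f (Lx, y) - f (0, y))) - _
  rw [e1]
  ring
end

section
/- Let L_x, L_y > 0 and let w : ℝ² → ℝ be three times continuously differentiable on a neighborhood of the closed rectangle [0, L_x] × [0, L_y]. Assume w_x(0, y) = 0 for all y ∈ [0, L_y] (clamped-edge condition on Γ_W), and assume w_xx·w_yy = w_xy² holds at every point of the rectangle. Then ∫₀^{L_y} w_x(L_x, y)·w_yy(L_x, y) dy = ∫₀^{L_x} [ w_x(x, L_y)·w_xy(x, L_y) − w_x(x, 0)·w_xy(x, 0) ] dx. -/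
open Set MeasureTheory in
theorem pdx_eq_aux {U : Set (ℝ × ℝ)} (hU : IsOpen U) {f : ℝ → ℝ → ℝ}
    (hf : ContDiffOn ℝ 1 (fun q : ℝ × ℝ => f q.1 q.2) U) {q : ℝ × ℝ} (hq : q ∈ U) :
    pdx f q.1 q.2 = fderiv ℝ (fun q : ℝ × ℝ => f q.1 q.2) q (1, 0) := by
  have h1 : HasFDerivAt (fun q : ℝ × ℝ => f q.1 q.2) _ (q.1, q.2) :=
    ((hf.differentiableOn one_ne_zero).differentiableAt (hU.mem_nhds hq)).hasFDerivAt
  have h2 : HasDerivAt (fun x : ℝ => (x, q.2)) ((1 : ℝ), (0 : ℝ)) q.1 :=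
    (hasDerivAt_id q.1).prodMk (hasDerivAt_const q.1 q.2)
  exact (h1.comp_hasDerivAt q.1 h2).deriv

theorem pdy_eq_aux {U : Set (ℝ × ℝ)} (hU : IsOpen U) {f : ℝ → ℝ → ℝ}
    (hf : ContDiffOn ℝ 1 (fun q : ℝ × ℝ => f q.1 q.2) U) {q : ℝ × ℝ} (hq : q ∈ U) :
    pdy f q.1 q.2 = fderiv ℝ (fun q : ℝ × ℝ => f q.1 q.2) q (0, 1) := by
  have h1 : HasFDerivAt (fun q : ℝ × ℝ => f q.1 q.2) _ (q.1, q.2) :=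
    ((hf.differentiableOn one_ne_zero).differentiableAt (hU.mem_nhds hq)).hasFDerivAt
  have h2 : HasDerivAt (fun y : ℝ => (q.1, y)) ((0 : ℝ), (1 : ℝ)) q.2 :=
    (hasDerivAt_const q.2 q.1).prodMk (hasDerivAt_id q.2)
  exact (h1.comp_hasDerivAt q.2 h2).deriv

theorem pdx_contDiffOn_aux {U : Set (ℝ × ℝ)} (hU : IsOpen U) {f : ℝ → ℝ → ℝ} (n m : ℕ)
    (hnm : n + 1 ≤ m)
    (hf : ContDiffOn ℝ m (fun q : ℝ × ℝ => f q.1 q.2) U) :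
    ContDiffOn ℝ n (fun q : ℝ × ℝ => pdx f q.1 q.2) U := by
  have h := (hf.fderiv_of_isOpen (m := n) hU (by exact_mod_cast hnm)).clm_apply
    (contDiffOn_const (c := ((1 : ℝ), (0 : ℝ))))
  exact h.congr fun q hq => pdx_eq_aux hU (hf.of_le (by exact_mod_cast (by omega : 1 ≤ m))) hq

theorem pdy_contDiffOn_aux {U : Set (ℝ × ℝ)} (hU : IsOpen U) {f : ℝ → ℝ → ℝ} (n m : ℕ)
    (hnm : n + 1 ≤ m)
    (hf : ContDiffOn ℝ m (fun q : ℝ × ℝ => f q.1 q.2) U) :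
    ContDiffOn ℝ n (fun q : ℝ × ℝ => pdy f q.1 q.2) U := by
  have h := (hf.fderiv_of_isOpen (m := n) hU (by exact_mod_cast hnm)).clm_apply
    (contDiffOn_const (c := ((0 : ℝ), (1 : ℝ))))
  exact h.congr fun q hq => pdy_eq_aux hU (hf.of_le (by exact_mod_cast (by omega : 1 ≤ m))) hq

theorem pd_comm_aux {U : Set (ℝ × ℝ)} (hU : IsOpen U) {f : ℝ → ℝ → ℝ}
    (hf : ContDiffOn ℝ 2 (fun q : ℝ × ℝ => f q.1 q.2) U) {q : ℝ × ℝ} (hq : q ∈ U) :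
    pdx (pdy f) q.1 q.2 = pdy (pdx f) q.1 q.2 := by
  have hf1 : ContDiffOn ℝ 1 (fun q : ℝ × ℝ => f q.1 q.2) U := hf.of_le (by norm_num)
  have hx := pdx_contDiffOn_aux hU 1 2 le_rfl hf
  have hy := pdy_contDiffOn_aux hU 1 2 le_rfl hf
  rw [pdx_eq_aux hU (by exact_mod_cast hy) hq, pdy_eq_aux hU (by exact_mod_cast hx) hq]
  have ex : (fun q : ℝ × ℝ => pdx f q.1 q.2) =ᶠ[nhds q]
      fun p => fderiv ℝ (fun q : ℝ × ℝ => f q.1 q.2) p (1, 0) := by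
    filter_upwards [hU.mem_nhds hq] with p hp using pdx_eq_aux hU hf1 hp
  have ey : (fun q : ℝ × ℝ => pdy f q.1 q.2) =ᶠ[nhds q]
      fun p => fderiv ℝ (fun q : ℝ × ℝ => f q.1 q.2) p (0, 1) := by
    filter_upwards [hU.mem_nhds hq] with p hp using pdy_eq_aux hU hf1 hp
  rw [ex.fderiv_eq, ey.fderiv_eq]
  have hd : DifferentiableAt ℝ (fderiv ℝ (fun q : ℝ × ℝ => f q.1 q.2)) q :=
    ((hf.fderiv_of_isOpen (m := 1) hU (by norm_num)).differentiableOn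
      one_ne_zero).differentiableAt (hU.mem_nhds hq)
  have hs : IsSymmSndFDerivAt ℝ (fun q : ℝ × ℝ => f q.1 q.2) q :=
    (hf.contDiffAt (hU.mem_nhds hq)).isSymmSndFDerivAt (by simp)
  rw [fderiv_clm_apply hd (by fun_prop), fderiv_clm_apply hd (by fun_prop)]
  simpa using hs.eq (1, 0) (0, 1)

/-- For a plate clamped along `Γ_W = {x = 0}` (so `wₓ(0,y) = 0`)
and satisfying `wₓₓ w_yy = wₓy²` pointwise, the east-edge integral of
`wₓ w_yy` equals the difference of the north/south edge integrals of `wₓ wₓy`. -/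
theorem clamped_edge_boundary_identity
    (Lx Ly : ℝ) (hLx : 0 < Lx) (hLy : 0 < Ly)
    (w : ℝ → ℝ → ℝ) (U : Set (ℝ × ℝ)) (hU : IsOpen U)
    (hsub : Set.Icc (0 : ℝ) Lx ×ˢ Set.Icc (0 : ℝ) Ly ⊆ U)
    (hw : ContDiffOn ℝ 3 (fun q : ℝ × ℝ => w q.1 q.2) U)
    (hclamp : ∀ y ∈ Set.Icc (0 : ℝ) Ly, pdx w 0 y = 0)
    (hgauss : ∀ x ∈ Set.Icc (0 : ℝ) Lx, ∀ y ∈ Set.Icc (0 : ℝ) Ly,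
      pdx (pdx w) x y * pdy (pdy w) x y = (pdy (pdx w) x y) ^ 2) :
    (∫ y in (0 : ℝ)..Ly, pdx w Lx y * pdy (pdy w) Lx y)
      = ∫ x in (0 : ℝ)..Lx,
          (pdx w x Ly * pdy (pdx w) x Ly - pdx w x 0 * pdy (pdx w) x 0) := by
  have hx := pdx_contDiffOn_aux hU 2 3 le_rfl hw
  have hy := pdy_contDiffOn_aux hU 2 3 le_rfl hw
  have hxx := pdx_contDiffOn_aux hU 1 2 le_rfl hx
  have hxy := pdy_contDiffOn_aux hU 1 2 le_rfl hx
  have hyy := pdy_contDiffOn_aux hU 1 2 le_rfl hy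
  have hx1 : ContDiffOn ℝ 1 (fun q : ℝ × ℝ => pdx w q.1 q.2) U := hx.of_le (by norm_num)
  have hxy1 : ContDiffOn ℝ 1 (fun q : ℝ × ℝ => pdy (pdx w) q.1 q.2) U := by
    exact_mod_cast hxy
  have hyy1 : ContDiffOn ℝ 1 (fun q : ℝ × ℝ => pdy (pdy w) q.1 q.2) U := by
    exact_mod_cast hyy
  have hthird : ∀ q ∈ U, pdx (pdy (pdy w)) q.1 q.2 = pdy (pdy (pdx w)) q.1 q.2 := by
    intro q hq
    rw [pd_comm_aux hU hy hq]
    have e : (fun y' => pdx (pdy w) q.1 y') =ᶠ[nhds q.2] fun y' => pdy (pdx w) q.1 y' := by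
      have hc : ContinuousAt (fun y' : ℝ => (q.1, y')) q.2 := by fun_prop
      filter_upwards [hc.preimage_mem_nhds (hU.mem_nhds hq)] with y hy'
      exact pd_comm_aux hU (hw.of_le (by norm_num)) (q := (q.1, y)) hy'
    exact e.deriv_eq
  have hdx : ∀ q ∈ U, DifferentiableAt ℝ (fun q : ℝ × ℝ => pdx w q.1 q.2) q := fun q hq =>
    (hx1.differentiableOn one_ne_zero).differentiableAt (hU.mem_nhds hq)
  have hdxy : ∀ q ∈ U, DifferentiableAt ℝ (fun q : ℝ × ℝ => pdy (pdx w) q.1 q.2) q :=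
    fun q hq => (hxy1.differentiableOn one_ne_zero).differentiableAt (hU.mem_nhds hq)
  have hdyy : ∀ q ∈ U, DifferentiableAt ℝ (fun q : ℝ × ℝ => pdy (pdy w) q.1 q.2) q :=
    fun q hq => (hyy1.differentiableOn one_ne_zero).differentiableAt (hU.mem_nhds hq)
  let A : ℝ × ℝ → ℝ := fun q => pdx w q.1 q.2
  let B : ℝ × ℝ → ℝ := fun q => pdy (pdx w) q.1 q.2
  let C : ℝ × ℝ → ℝ := fun q => pdy (pdy w) q.1 q.2
  let f' : ℝ × ℝ → ℝ × ℝ →L[ℝ] ℝ := fun q => A q • fderiv ℝ C q + C q • fderiv ℝ A q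
  let g' : ℝ × ℝ → ℝ × ℝ →L[ℝ] ℝ := fun q => -(A q • fderiv ℝ B q + B q • fderiv ℝ A q)
  have hzero : ∀ q ∈ Set.Icc (0 : ℝ) Lx ×ˢ Set.Icc (0 : ℝ) Ly,
      f' q (1, 0) + g' q (0, 1) = 0 := by
    intro q hq
    have hqU := hsub hq
    have h1 := pdx_eq_aux hU hyy1 hqU
    have h2 := pdx_eq_aux hU hx1 hqU
    have h3 := pdy_eq_aux hU hxy1 hqU
    have h4 := pdy_eq_aux hU hx1 hqU
    have h5 := hthird q hqU
    have h6 := hgauss q.1 hq.1 q.2 hq.2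
    simp only [f', g', A, B, C, ContinuousLinearMap.add_apply, ContinuousLinearMap.neg_apply,
      ContinuousLinearMap.smul_apply, smul_eq_mul, ← h1, ← h2, ← h3, ← h4, h5]
    linear_combination h6
  have hsubI : ∀ q ∈ Set.Ioo (min 0 Lx) (max 0 Lx) ×ˢ Set.Ioo (min 0 Ly) (max 0 Ly), q ∈ U := by
    rw [min_eq_left hLx.le, min_eq_left hLy.le, max_eq_right hLx.le, max_eq_right hLy.le]
    exact fun q hq => hsub ⟨Set.Ioo_subset_Icc_self hq.1, Set.Ioo_subset_Icc_self hq.2⟩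
  have key := MeasureTheory.integral2_divergence_prod_of_hasFDerivAt
    (fun q => A q * C q) (fun q => -(A q * B q)) f' g' 0 0 Lx Ly
    (by
      rw [Set.uIcc_of_le hLx.le, Set.uIcc_of_le hLy.le]
      exact (hx1.continuousOn.mul hyy1.continuousOn).mono hsub)
    (by
      rw [Set.uIcc_of_le hLx.le, Set.uIcc_of_le hLy.le]
      exact (hx1.continuousOn.mul hxy1.continuousOn).neg.mono hsub)
    (fun q hq => (hdx q (hsubI q hq)).hasFDerivAt.mul (hdyy q (hsubI q hq)).hasFDerivAt)
    (fun q hq => ((hdx q (hsubI q hq)).hasFDerivAt.mul (hdxy q (hsubI q hq)).hasFDerivAt).neg)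
    (by
      rw [Set.uIcc_of_le hLx.le, Set.uIcc_of_le hLy.le]
      exact (MeasureTheory.integrableOn_zero).congr_fun (fun q hq => (hzero q hq).symm)
        (measurableSet_Icc.prod measurableSet_Icc))
  have hl : (∫ x in (0:ℝ)..Lx, ∫ y in (0:ℝ)..Ly, f' (x, y) (1, 0) + g' (x, y) (0, 1)) = 0 := by
    rw [intervalIntegral.integral_congr (g := fun _ => (0 : ℝ))]
    · simp
    · intro x hx'
      rw [Set.uIcc_of_le hLx.le] at hx'
      show (∫ y in (0:ℝ)..Ly, f' (x, y) (1, 0) + g' (x, y) (0, 1)) = 0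
      rw [intervalIntegral.integral_congr (g := fun _ => (0 : ℝ))]
      · simp
      · intro y hy'
        rw [Set.uIcc_of_le hLy.le] at hy'
        exact hzero (x, y) ⟨hx', hy'⟩
  have hwest : (∫ y in (0:ℝ)..Ly, A (0, y) * C (0, y)) = 0 := by
    rw [intervalIntegral.integral_congr (g := fun _ => (0 : ℝ))]
    · simp
    · intro y hy'
      rw [Set.uIcc_of_le hLy.le] at hy'
      simp [A, hclamp y hy']
  have hint : ∀ c ∈ Set.Icc (0:ℝ) Ly,
      IntervalIntegrable (fun x => A (x, c) * B (x, c)) MeasureTheory.volume 0 Lx := by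
    intro c hc
    apply ContinuousOn.intervalIntegrable
    rw [Set.uIcc_of_le hLx.le]
    exact (hx1.continuousOn.mul hxy1.continuousOn).comp (f := fun x : ℝ => (x, c))
      (by fun_prop) (fun x hx' => hsub ⟨hx', hc⟩)
  have hsubt := intervalIntegral.integral_sub (hint Ly ⟨hLy.le, le_rfl⟩) (hint 0 ⟨le_rfl, hLy.le⟩)
  rw [hl, hwest, intervalIntegral.integral_neg, intervalIntegral.integral_neg] at key
  change (∫ y in (0:ℝ)..Ly, A (Lx, y) * C (Lx, y)) =
    ∫ x in (0:ℝ)..Lx, (A (x, Ly) * B (x, Ly) - A (x, 0) * B (x, 0))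
  rw [hsubt]
  linarith
end

section
/- Let Ω ⊆ ℝ² be open, let ν ∈ ℝ, and let u, v, w : Ω → ℝ be twice continuously differentiable, satisfying at each point of Ω the three η²-effective inextensibility constraints u_x = −(1/2)w_x², v_y = −(1/2)w_y², and u_y + v_x = −w_x·w_y. Define κ₁₁ = w_y·v_xx + w_x·u_xx − (1 + u_x + v_y)·w_xx, κ₂₂ = w_x·u_yy + w_y·v_yy − (1 + u_x + v_y)·w_yy, and κ₁₂ = 2[v_xy·w_y + u_xy·w_x − (1 + u_x + v_y)·w_xy]. Then at every point of Ω: κ₁₁² + κ₂₂² + 2ν·κ₁₁·κ₂₂ + ((1 − ν)/2)·κ₁₂² = (1 + (1/2)w_x² + (1/2)w_y²)² · ( w_xx² + w_yy² + 2ν·w_xx·w_yy + 2(1 − ν)·w_xy² ). -/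
lemma aux_hx {g : ℝ → ℝ → ℝ} {G : ℝ × ℝ →L[ℝ] ℝ} {p : ℝ × ℝ}
    (h : HasFDerivAt (fun q : ℝ × ℝ => g q.1 q.2) G p) :
    HasDerivAt (fun x' => g x' p.2) (G (1, 0)) p.1 := by
  have h2 : HasDerivAt (fun x' : ℝ => (x', p.2)) ((1 : ℝ), (0 : ℝ)) p.1 :=
    (hasDerivAt_id p.1).prodMk (hasDerivAt_const p.1 p.2)
  exact HasFDerivAt.comp_hasDerivAt (l := fun q : ℝ × ℝ => g q.1 q.2) p.1 h h2

lemma aux_hy {g : ℝ → ℝ → ℝ} {G : ℝ × ℝ →L[ℝ] ℝ} {p : ℝ × ℝ}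
    (h : HasFDerivAt (fun q : ℝ × ℝ => g q.1 q.2) G p) :
    HasDerivAt (fun y' => g p.1 y') (G (0, 1)) p.2 := by
  have h2 : HasDerivAt (fun y' : ℝ => (p.1, y')) ((0 : ℝ), (1 : ℝ)) p.2 :=
    (hasDerivAt_const p.2 p.1).prodMk (hasDerivAt_id p.2)
  exact HasFDerivAt.comp_hasDerivAt (l := fun q : ℝ × ℝ => g q.1 q.2) p.2 h h2

lemma aux_cx {Ω : Set (ℝ × ℝ)} (hΩ : IsOpen Ω) {g h : ℝ → ℝ → ℝ}
    (e : ∀ p ∈ Ω, g p.1 p.2 = h p.1 p.2) {p : ℝ × ℝ} (hp : p ∈ Ω) :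
    pdx g p.1 p.2 = pdx h p.1 p.2 := by
  apply Filter.EventuallyEq.deriv_eq
  have c : ContinuousAt (fun x' : ℝ => (x', p.2)) p.1 := by fun_prop
  filter_upwards [c.preimage_mem_nhds (hΩ.mem_nhds hp)] with x hx
  exact e _ hx

lemma aux_cy {Ω : Set (ℝ × ℝ)} (hΩ : IsOpen Ω) {g h : ℝ → ℝ → ℝ}
    (e : ∀ p ∈ Ω, g p.1 p.2 = h p.1 p.2) {p : ℝ × ℝ} (hp : p ∈ Ω) :
    pdy g p.1 p.2 = pdy h p.1 p.2 := by
  apply Filter.EventuallyEq.deriv_eq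
  have c : ContinuousAt (fun y' : ℝ => (p.1, y')) p.2 := by fun_prop
  filter_upwards [c.preimage_mem_nhds (hΩ.mem_nhds hp)] with x hx
  exact e _ hx

lemma aux_main {Ω : Set (ℝ × ℝ)} (hΩ : IsOpen Ω) {f : ℝ → ℝ → ℝ}
    (hf : ContDiffOn ℝ 2 (fun q : ℝ × ℝ => f q.1 q.2) Ω) {p : ℝ × ℝ} (hp : p ∈ Ω) :
    ∃ a b c : ℝ, 
      HasDerivAt (fun x' => pdx f x' p.2) a p.1 ∧ HasDerivAt (fun y' => pdx f p.1 y') b p.2 ∧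
      HasDerivAt (fun x' => pdy f x' p.2) b p.1 ∧ HasDerivAt (fun y' => pdy f p.1 y') c p.2 := by
  set F : ℝ × ℝ → ℝ := fun q => f q.1 q.2 with hF
  have hat : ContDiffAt ℝ 2 F p := hf.contDiffAt (hΩ.mem_nhds hp)
  have hd : ∀ q ∈ Ω, HasFDerivAt F (fderiv ℝ F q) q := fun q hq =>
    ((hf.contDiffAt (hΩ.mem_nhds hq)).differentiableAt (by norm_num)).hasFDerivAt
  have h2 : HasFDerivAt (fderiv ℝ F) (fderiv ℝ (fderiv ℝ F) p) p :=
    ((hat.fderiv_right (m := 1) (by norm_num)).differentiableAt (by norm_num)).hasFDerivAt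
  have sym : IsSymmSndFDerivAt ℝ F p := hat.isSymmSndFDerivAt (by simp)
  have key : ∀ e : ℝ × ℝ, HasFDerivAt (fun q => fderiv ℝ F q e)
      ((fderiv ℝ (fderiv ℝ F) p).flip e) p := fun e => by
    simpa using h2.clm_apply (hasFDerivAt_const e p)
  have kx : HasFDerivAt (fun q : ℝ × ℝ => pdx f q.1 q.2)
      ((fderiv ℝ (fderiv ℝ F) p).flip (1, 0)) p := by
    refine (key (1, 0)).congr_of_eventuallyEq ?_
    filter_upwards [hΩ.mem_nhds hp] with q hq
    exact (aux_hx (hd q hq)).deriv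
  have ky : HasFDerivAt (fun q : ℝ × ℝ => pdy f q.1 q.2)
      ((fderiv ℝ (fderiv ℝ F) p).flip (0, 1)) p := by
    refine (key (0, 1)).congr_of_eventuallyEq ?_
    filter_upwards [hΩ.mem_nhds hp] with q hq
    exact (aux_hy (hd q hq)).deriv
  refine ⟨_, _, _, aux_hx kx, aux_hy kx, ?_, aux_hy ky⟩
  have := aux_hx ky
  simp only [ContinuousLinearMap.flip_apply] at this ⊢
  rwa [sym.eq (0, 1) (1, 0)]

/-- Under the three η²-effective inextensibility constraints, the
bending energy density factors as `(1 + ½|∇w|²)²` times the linear Kirchhoff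
bending density. -/
theorem bending_energy_density_factors
    (Ω : Set (ℝ × ℝ)) (hΩ : IsOpen Ω) (ν : ℝ) (u v w : ℝ → ℝ → ℝ)
    (hu : ContDiffOn ℝ 2 (fun q : ℝ × ℝ => u q.1 q.2) Ω)
    (hv : ContDiffOn ℝ 2 (fun q : ℝ × ℝ => v q.1 q.2) Ω)
    (hw : ContDiffOn ℝ 2 (fun q : ℝ × ℝ => w q.1 q.2) Ω)
    (hc1 : ∀ p ∈ Ω, pdx u p.1 p.2 = -(1 / 2) * (pdx w p.1 p.2) ^ 2)
    (hc2 : ∀ p ∈ Ω, pdy v p.1 p.2 = -(1 / 2) * (pdy w p.1 p.2) ^ 2)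
    (hc3 : ∀ p ∈ Ω, pdy u p.1 p.2 + pdx v p.1 p.2
        = -(pdx w p.1 p.2) * pdy w p.1 p.2) :
    ∀ p ∈ Ω,
      (pdy w p.1 p.2 * pdx (pdx v) p.1 p.2 + pdx w p.1 p.2 * pdx (pdx u) p.1 p.2
          - (1 + pdx u p.1 p.2 + pdy v p.1 p.2) * pdx (pdx w) p.1 p.2) ^ 2
        + (pdx w p.1 p.2 * pdy (pdy u) p.1 p.2 + pdy w p.1 p.2 * pdy (pdy v) p.1 p.2
            - (1 + pdx u p.1 p.2 + pdy v p.1 p.2) * pdy (pdy w) p.1 p.2) ^ 2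
        + 2 * ν *
          (pdy w p.1 p.2 * pdx (pdx v) p.1 p.2 + pdx w p.1 p.2 * pdx (pdx u) p.1 p.2
            - (1 + pdx u p.1 p.2 + pdy v p.1 p.2) * pdx (pdx w) p.1 p.2) *
          (pdx w p.1 p.2 * pdy (pdy u) p.1 p.2 + pdy w p.1 p.2 * pdy (pdy v) p.1 p.2
            - (1 + pdx u p.1 p.2 + pdy v p.1 p.2) * pdy (pdy w) p.1 p.2)
        + ((1 - ν) / 2) *
          (2 * (pdx (pdy v) p.1 p.2 * pdy w p.1 p.2
              + pdx (pdy u) p.1 p.2 * pdx w p.1 p.2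
              - (1 + pdx u p.1 p.2 + pdy v p.1 p.2) * pdx (pdy w) p.1 p.2)) ^ 2
      = (1 + (1 / 2) * (pdx w p.1 p.2) ^ 2 + (1 / 2) * (pdy w p.1 p.2) ^ 2) ^ 2 *
          ((pdx (pdx w) p.1 p.2) ^ 2 + (pdy (pdy w) p.1 p.2) ^ 2
            + 2 * ν * pdx (pdx w) p.1 p.2 * pdy (pdy w) p.1 p.2
            + 2 * (1 - ν) * (pdx (pdy w) p.1 p.2) ^ 2) := by
  intro p hp
  obtain ⟨uxx, uxy, uyy, u1, u2, u3, u4⟩ := aux_main hΩ hu hp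
  obtain ⟨vxx, vxy, vyy, v1, v2, v3, v4⟩ := aux_main hΩ hv hp
  obtain ⟨wxx, wxy, wyy, w1, w2, w3, w4⟩ := aux_main hΩ hw hp
  have e1 := aux_cx hΩ (g := pdx u) (h := fun x y => -(1 / 2) * (pdx w x y) ^ 2) hc1 hp
  have e2 := aux_cy hΩ (g := pdx u) (h := fun x y => -(1 / 2) * (pdx w x y) ^ 2) hc1 hp
  have e3 := aux_cx hΩ (g := pdy v) (h := fun x y => -(1 / 2) * (pdy w x y) ^ 2) hc2 hp
  have e4 := aux_cy hΩ (g := pdy v) (h := fun x y => -(1 / 2) * (pdy w x y) ^ 2) hc2 hp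
  have e5 := aux_cx hΩ (g := fun x y => pdy u x y + pdx v x y)
    (h := fun x y => -(pdx w x y) * pdy w x y) hc3 hp
  have e6 := aux_cy hΩ (g := fun x y => pdy u x y + pdx v x y)
    (h := fun x y => -(pdx w x y) * pdy w x y) hc3 hp
  have f1 := u1.deriv.symm.trans (e1.trans ((w1.pow 2).const_mul (-(1 / 2))).deriv)
  have f2 := u2.deriv.symm.trans (e2.trans ((w2.pow 2).const_mul (-(1 / 2))).deriv)
  have f3 := v3.deriv.symm.trans (e3.trans ((w3.pow 2).const_mul (-(1 / 2))).deriv)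
  have f4 := v4.deriv.symm.trans (e4.trans ((w4.pow 2).const_mul (-(1 / 2))).deriv)
  have f5 := (u3.add v1).deriv.symm.trans (e5.trans (w1.neg.mul w3).deriv)
  have f6 := (u4.add v2).deriv.symm.trans (e6.trans (w2.neg.mul w4).deriv)
  rw [show pdx (pdx u) p.1 p.2 = uxx from u1.deriv, show pdx (pdy u) p.1 p.2 = uxy from u3.deriv,
    show pdy (pdy u) p.1 p.2 = uyy from u4.deriv,
    show pdx (pdx v) p.1 p.2 = vxx from v1.deriv, show pdx (pdy v) p.1 p.2 = vxy from v3.deriv,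
    show pdy (pdy v) p.1 p.2 = vyy from v4.deriv,
    show pdx (pdx w) p.1 p.2 = wxx from w1.deriv, show pdx (pdy w) p.1 p.2 = wxy from w3.deriv,
    show pdy (pdy w) p.1 p.2 = wyy from w4.deriv, hc1 p hp, hc2 p hp]
  simp only [Pi.neg_apply] at f5 f6
  generalize pdx w p.1 p.2 = a at *
  generalize pdy w p.1 p.2 = b at *
  have g1 : uxx = -a * wxx := by rw [f1]; norm_num; ring
  have g2 : uxy = -a * wxy := by rw [f2]; norm_num; ring
  have g3 : vxy = -b * wxy := by rw [f3]; norm_num; ring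
  have g4 : vyy = -b * wyy := by rw [f4]; norm_num; ring
  have g5 : vxx = -b * wxx := by linarith
  have g6 : uyy = -a * wyy := by linarith
  rw [g1, g2, g3, g4, g5, g6]
  ring
end

section
/- Let L_x, L_y > 0 and let u, v, w : ℝ² → ℝ be twice continuously differentiable on a neighborhood of [0, L_x] × [0, L_y], satisfying at every point the three η²-effective inextensibility constraints u_x = −(1/2)w_x², v_y = −(1/2)w_y², and u_y + v_x = −w_x·w_y, together with the clamped-edge conditions u(0, y) = 0 and v(0, y) = 0 for all y ∈ [0, L_y]. Then for all (x, y) ∈ [0, L_x] × [0, L_y]: u(x, y) = −(1/2)∫₀ˣ w_x(ξ, y)² dξ and v(x, y) = ∫₀ˣ∫₀^{ξ} w_x(ζ, y)·w_xy(ζ, y) dζ dξ − ∫₀ˣ w_x(ξ, y)·w_y(ξ, y) dξ. In particular, the in-plane displacements u and v are determined by the transverse deflection w alone. -/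
theorem aux_slice_x {f : ℝ → ℝ → ℝ} {x y : ℝ}
    (h : DifferentiableAt ℝ (fun q : ℝ × ℝ => f q.1 q.2) (x, y)) :
    HasDerivAt (fun x' => f x' y) (fderiv ℝ (fun q : ℝ × ℝ => f q.1 q.2) (x, y) (1, 0)) x := by
  have h2 : HasDerivAt (fun x' : ℝ => (x', y)) ((1 : ℝ), (0 : ℝ)) x :=
    (hasDerivAt_id x).prodMk (hasDerivAt_const x y)
  exact HasFDerivAt.comp_hasDerivAt (f := fun x' : ℝ => (x', y)) x h.hasFDerivAt h2

theorem aux_slice_y {f : ℝ → ℝ → ℝ} {x y : ℝ}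
    (h : DifferentiableAt ℝ (fun q : ℝ × ℝ => f q.1 q.2) (x, y)) :
    HasDerivAt (fun y' => f x y') (fderiv ℝ (fun q : ℝ × ℝ => f q.1 q.2) (x, y) (0, 1)) y := by
  have h2 : HasDerivAt (fun y' : ℝ => (x, y')) ((0 : ℝ), (1 : ℝ)) y :=
    (hasDerivAt_const y x).prodMk (hasDerivAt_id y)
  exact HasFDerivAt.comp_hasDerivAt (f := fun y' : ℝ => (x, y')) y h.hasFDerivAt h2

theorem aux_diff {f : ℝ → ℝ → ℝ} {U : Set (ℝ × ℝ)} (hU : IsOpen U) {n : WithTop ℕ∞}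
    (hn : n ≠ 0)
    (hf : ContDiffOn ℝ n (fun q : ℝ × ℝ => f q.1 q.2) U) {p : ℝ × ℝ} (hp : p ∈ U) :
    DifferentiableAt ℝ (fun q : ℝ × ℝ => f q.1 q.2) p :=
  (hf.contDiffAt (hU.mem_nhds hp)).differentiableAt hn

theorem aux_pdx {f : ℝ → ℝ → ℝ} {U : Set (ℝ × ℝ)} (hU : IsOpen U) {n : WithTop ℕ∞}
    (hn : n ≠ 0)
    (hf : ContDiffOn ℝ n (fun q : ℝ × ℝ => f q.1 q.2) U) {p : ℝ × ℝ} (hp : p ∈ U) :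
    pdx f p.1 p.2 = fderiv ℝ (fun q : ℝ × ℝ => f q.1 q.2) p (1, 0) :=
  (aux_slice_x (x := p.1) (y := p.2) (aux_diff hU hn hf hp)).deriv

theorem aux_pdy {f : ℝ → ℝ → ℝ} {U : Set (ℝ × ℝ)} (hU : IsOpen U) {n : WithTop ℕ∞}
    (hn : n ≠ 0)
    (hf : ContDiffOn ℝ n (fun q : ℝ × ℝ => f q.1 q.2) U) {p : ℝ × ℝ} (hp : p ∈ U) :
    pdy f p.1 p.2 = fderiv ℝ (fun q : ℝ × ℝ => f q.1 q.2) p (0, 1) :=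
  (aux_slice_y (x := p.1) (y := p.2) (aux_diff hU hn hf hp)).deriv

theorem aux_fd {F : ℝ × ℝ → ℝ} {U : Set (ℝ × ℝ)} (hU : IsOpen U) {m n : WithTop ℕ∞}
    (hmn : m + 1 ≤ n) (hf : ContDiffOn ℝ n F U) (e : ℝ × ℝ) :
    ContDiffOn ℝ m (fun q => fderiv ℝ F q e) U :=
  (hf.fderiv_of_isOpen hU hmn).clm_apply contDiffOn_const

theorem aux_cpdx {f : ℝ → ℝ → ℝ} {U : Set (ℝ × ℝ)} (hU : IsOpen U) {m n : WithTop ℕ∞}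
    (hn : n ≠ 0) (hmn : m + 1 ≤ n)
    (hf : ContDiffOn ℝ n (fun q : ℝ × ℝ => f q.1 q.2) U) :
    ContDiffOn ℝ m (fun q : ℝ × ℝ => pdx f q.1 q.2) U :=
  (aux_fd hU hmn hf (1, 0)).congr fun _ hp => aux_pdx hU hn hf hp

theorem aux_cpdy {f : ℝ → ℝ → ℝ} {U : Set (ℝ × ℝ)} (hU : IsOpen U) {m n : WithTop ℕ∞}
    (hn : n ≠ 0) (hmn : m + 1 ≤ n)
    (hf : ContDiffOn ℝ n (fun q : ℝ × ℝ => f q.1 q.2) U) :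
    ContDiffOn ℝ m (fun q : ℝ × ℝ => pdy f q.1 q.2) U :=
  (aux_fd hU hmn hf (0, 1)).congr fun _ hp => aux_pdy hU hn hf hp

theorem aux_symm {f : ℝ → ℝ → ℝ} {U : Set (ℝ × ℝ)} (hU : IsOpen U)
    (hf : ContDiffOn ℝ 2 (fun q : ℝ × ℝ => f q.1 q.2) U) {p : ℝ × ℝ} (hp : p ∈ U) :
    pdx (pdy f) p.1 p.2 = pdy (pdx f) p.1 p.2 := by
  have h12 : (1 : WithTop ℕ∞) + 1 ≤ 2 := by norm_num
  have hd : DifferentiableAt ℝ (fderiv ℝ (fun q : ℝ × ℝ => f q.1 q.2)) p :=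
    ((hf.fderiv_of_isOpen hU h12).contDiffAt (hU.mem_nhds hp)).differentiableAt one_ne_zero
  have key : ∀ e e' : ℝ × ℝ, fderiv ℝ (fun q => fderiv ℝ (fun q : ℝ × ℝ => f q.1 q.2) q e) p e'
      = fderiv ℝ (fderiv ℝ (fun q : ℝ × ℝ => f q.1 q.2)) p e' e := by
    intro e e'
    have := (hd.hasFDerivAt.clm_apply (hasFDerivAt_const e p)).fderiv
    rw [this]; simp
  rw [aux_pdx hU one_ne_zero (aux_cpdy hU two_ne_zero h12 hf) hp,
    aux_pdy hU one_ne_zero (aux_cpdx hU two_ne_zero h12 hf) hp]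
  have e1 : (fun q : ℝ × ℝ => pdy f q.1 q.2) =ᶠ[nhds p]
      fun q => fderiv ℝ (fun q : ℝ × ℝ => f q.1 q.2) q (0, 1) := by
    filter_upwards [hU.mem_nhds hp] with q hq using aux_pdy hU two_ne_zero hf hq
  have e2 : (fun q : ℝ × ℝ => pdx f q.1 q.2) =ᶠ[nhds p]
      fun q => fderiv ℝ (fun q : ℝ × ℝ => f q.1 q.2) q (1, 0) := by
    filter_upwards [hU.mem_nhds hp] with q hq using aux_pdx hU two_ne_zero hf hq
  rw [e1.fderiv_eq, e2.fderiv_eq, key, key]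
  exact (hf.contDiffAt (hU.mem_nhds hp)).isSymmSndFDerivAt (by simp) _ _

/-- fundamental theorem of calculus along horizontal segments -/
theorem aux_ftc {f : ℝ → ℝ → ℝ} {U : Set (ℝ × ℝ)} (hU : IsOpen U)
    (hf : ContDiffOn ℝ 1 (fun q : ℝ × ℝ => f q.1 q.2) U) {x y : ℝ} (hx : 0 ≤ x)
    (hs : ∀ t ∈ Set.Icc 0 x, (t, y) ∈ U) :
    ∫ t in (0 : ℝ)..x, pdx f t y = f x y - f 0 y := by
  apply intervalIntegral.integral_eq_sub_of_hasDerivAt (f := fun t => f t y)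
  · intro t ht
    rw [Set.uIcc_of_le hx] at ht
    exact (aux_slice_x (aux_diff hU one_ne_zero hf (hs t ht))).differentiableAt.hasDerivAt
  · apply ContinuousOn.intervalIntegrable
    rw [Set.uIcc_of_le hx]
    have := (aux_cpdx (m := 0) hU one_ne_zero (by simp) hf).continuousOn
    exact this.comp (f := fun t : ℝ => (t, y)) (by fun_prop) hs

/-- For a plate clamped along `{x = 0}` and satisfying the three
η²-effective inextensibility constraints, the in-plane displacements `u` and `v`
are determined by the transverse deflection `w`:
`u(x,y) = −(1/2)∫₀ˣ wₓ(ξ,y)² dξ` and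
`v(x,y) = ∫₀ˣ∫₀^ξ wₓ wₓy dζ dξ − ∫₀ˣ wₓ w_y dξ`. -/
theorem inplane_displacements_determined
    (Lx Ly : ℝ) (hLx : 0 < Lx) (hLy : 0 < Ly)
    (u v w : ℝ → ℝ → ℝ) (U : Set (ℝ × ℝ)) (hU : IsOpen U)
    (hsub : Set.Icc (0 : ℝ) Lx ×ˢ Set.Icc (0 : ℝ) Ly ⊆ U)
    (hu : ContDiffOn ℝ 2 (fun q : ℝ × ℝ => u q.1 q.2) U)
    (hv : ContDiffOn ℝ 2 (fun q : ℝ × ℝ => v q.1 q.2) U)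
    (hw : ContDiffOn ℝ 2 (fun q : ℝ × ℝ => w q.1 q.2) U)
    (hc1 : ∀ p ∈ U, pdx u p.1 p.2 = -(1 / 2) * (pdx w p.1 p.2) ^ 2)
    (hc2 : ∀ p ∈ U, pdy v p.1 p.2 = -(1 / 2) * (pdy w p.1 p.2) ^ 2)
    (hc3 : ∀ p ∈ U, pdy u p.1 p.2 + pdx v p.1 p.2
        = -(pdx w p.1 p.2) * pdy w p.1 p.2)
    (hclampu : ∀ y ∈ Set.Icc (0 : ℝ) Ly, u 0 y = 0)
    (hclampv : ∀ y ∈ Set.Icc (0 : ℝ) Ly, v 0 y = 0) :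
    ∀ x ∈ Set.Icc (0 : ℝ) Lx, ∀ y ∈ Set.Icc (0 : ℝ) Ly,
      u x y = -(1 / 2) * ∫ ξ in (0 : ℝ)..x, (pdx w ξ y) ^ 2 ∧
      v x y = (∫ ξ in (0 : ℝ)..x, ∫ ζ in (0 : ℝ)..ξ, pdx w ζ y * pdy (pdx w) ζ y)
        - ∫ ξ in (0 : ℝ)..x, pdx w ξ y * pdy w ξ y := by
  intro x hx y hy
  have h12 : (1 : WithTop ℕ∞) + 1 ≤ 2 := by norm_num
  have hle : (1 : WithTop ℕ∞) ≤ 2 := by norm_num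
  have hin : ∀ t ∈ Set.Icc 0 x, (t, y) ∈ U := fun t ht =>
    hsub ⟨⟨ht.1, ht.2.trans hx.2⟩, hy⟩
  have hwx := aux_cpdx hU two_ne_zero h12 hw
  have hwy := aux_cpdy hU two_ne_zero h12 hw
  have huy := aux_cpdy hU two_ne_zero h12 hu
  have h0 : (0 : ℝ) ∈ Set.Icc 0 x := ⟨le_rfl, hx.1⟩
  constructor
  · have h := aux_ftc hU (hu.of_le hle) hx.1 hin
    rw [hclampu y hy, sub_zero] at h
    rw [← h, ← intervalIntegral.integral_const_mul]
    apply intervalIntegral.integral_congr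
    intro t ht
    rw [Set.uIcc_of_le hx.1] at ht
    exact hc1 (t, y) (hin t ht)
  · -- the slope of u in y vanishes on the clamped edge
    have hu0 : pdy u 0 y = 0 := by
      have hd := (aux_slice_y (aux_diff hU two_ne_zero hu (hin 0 h0))).differentiableAt.hasDerivAt
      have h1 := hd.hasDerivWithinAt (s := Set.Icc 0 Ly)
      have h2 : HasDerivWithinAt (fun y' => u 0 y') 0 (Set.Icc 0 Ly) y :=
        (hasDerivWithinAt_const y _ (0 : ℝ)).congr hclampu (hclampu y hy)
      exact (uniqueDiffOn_Icc hLy y hy).eq_deriv _ h1 h2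
    have hmix : ∀ t ∈ Set.Icc 0 x, pdx (pdy u) t y = -(pdx w t y * pdy (pdx w) t y) := by
      intro t ht
      have hp := hin t ht
      rw [aux_symm hU hu hp]
      have e : (fun y' => pdx u t y') =ᶠ[nhds y] fun y' => -(1 / 2) * (pdx w t y') ^ 2 := by
        have hc : ContinuousAt (fun y' : ℝ => (t, y')) y := by fun_prop
        filter_upwards [hc.preimage_mem_nhds (hU.mem_nhds hp)] with y' hy'
        exact hc1 (t, y') hy'
      have hd := (aux_slice_y (aux_diff hU one_ne_zero hwx hp)).differentiableAt.hasDerivAt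
      have h3 := ((hd.pow 2).const_mul (-(1 / 2))).deriv
      change deriv (fun y' => pdx u t y') y = _
      rw [e.deriv_eq]
      refine Eq.trans h3 ?_
      simp only [pdy]
      push_cast
      ring
    have huyI : ∀ ξ ∈ Set.Icc 0 x,
        ∫ ζ in (0 : ℝ)..ξ, pdx w ζ y * pdy (pdx w) ζ y = -pdy u ξ y := by
      intro ξ hξ
      have h := aux_ftc hU huy hξ.1 (fun t ht => hin t ⟨ht.1, ht.2.trans hξ.2⟩)
      rw [hu0, sub_zero] at h
      rw [← h, ← intervalIntegral.integral_neg]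
      apply intervalIntegral.integral_congr
      intro t ht
      rw [Set.uIcc_of_le hξ.1] at ht
      simp only [hmix t ⟨ht.1, ht.2.trans hξ.2⟩, neg_neg]
    have h := aux_ftc hU (hv.of_le hle) hx.1 hin
    rw [hclampv y hy, sub_zero] at h
    have hcomp : ∀ g : ℝ × ℝ → ℝ, ContinuousOn g U →
        IntervalIntegrable (fun t => g (t, y)) MeasureTheory.volume 0 x := by
      intro g hg
      apply ContinuousOn.intervalIntegrable
      rw [Set.uIcc_of_le hx.1]
      exact hg.comp (f := fun t : ℝ => (t, y)) (by fun_prop) hin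
    have e1 : (∫ ξ in (0 : ℝ)..x, ∫ ζ in (0 : ℝ)..ξ, pdx w ζ y * pdy (pdx w) ζ y)
        = ∫ ξ in (0 : ℝ)..x, -pdy u ξ y := by
      apply intervalIntegral.integral_congr
      intro t ht
      rw [Set.uIcc_of_le hx.1] at ht
      exact huyI t ht
    rw [e1, ← h, ← intervalIntegral.integral_sub
      (hcomp (fun q => -pdy u q.1 q.2) huy.continuousOn.neg)
      (hcomp (fun q => pdx w q.1 q.2 * pdy w q.1 q.2) (hwx.continuousOn.mul hwy.continuousOn))]
    apply intervalIntegral.integral_congr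
    intro t ht
    rw [Set.uIcc_of_le hx.1] at ht
    have := hc3 (t, y) (hin t ht)
    simp only at this ⊢
    linarith
end

section
/- Let L_x, L_y > 0, D > 0, and let u, v, w, λ₁, λ₂ : ℝ² × ℝ → ℝ be smooth on a neighborhood of [0, L_x] × [0, L_y] × ℝ. Suppose the Model II system holds at every point: u_tt + ∂_x λ₁ = 0; v_tt + ∂_y λ₂ = 0; and w_tt + D[Δ((1 + |∇w|²)Δw) − ∇·(|Δw|²∇w)] + ∂_x(λ₁ w_x) + ∂_y(λ₂ w_y) = 0, where ∇ and Δ act in the spatial variables (x, y). Suppose further λ₁(L_x, y, t) = 0 and λ₂(x, 0, t) = 0 for all admissible (x, y, t). Then λ₁(x, y, t) = ∫ₓ^{L_x} u_tt(ξ, y, t) dξ, λ₂(x, y, t) = −∫₀^{y} v_tt(x, ζ, t) dζ, and w satisfies the closed equation w_tt + D·Δ[(1 + |∇w|²)Δw] − D·∇·(|Δw|²∇w) + ∂_x( w_x · ∫ₓ^{L_x} u_tt(ξ, y, t) dξ ) − ∂_y( w_y · ∫₀^{y} v_tt(x, ζ, t) dζ ) = 0. -/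
/-- Partial derivative in the first spatial variable `x`. -/
noncomputable def pX (f : ℝ → ℝ → ℝ → ℝ) (x y t : ℝ) : ℝ := deriv (fun s => f s y t) x

/-- Partial derivative in the second spatial variable `y`. -/
noncomputable def pY (f : ℝ → ℝ → ℝ → ℝ) (x y t : ℝ) : ℝ := deriv (fun s => f x s t) y

/-- Partial derivative in the time variable `t`. -/
noncomputable def pT (f : ℝ → ℝ → ℝ → ℝ) (x y t : ℝ) : ℝ := deriv (fun s => f x y s) t

/-- Spatial Laplacian `Δf = fₓₓ + f_yy`. -/
noncomputable def lap (f : ℝ → ℝ → ℝ → ℝ) (x y t : ℝ) : ℝ :=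
  pX (pX f) x y t + pY (pY f) x y t

/-- Squared spatial gradient `|∇f|² = fₓ² + f_y²`. -/
noncomputable def gradSq (f : ℝ → ℝ → ℝ → ℝ) (x y t : ℝ) : ℝ :=
  (pX f x y t) ^ 2 + (pY f x y t) ^ 2

lemma lineX {f : ℝ → ℝ → ℝ → ℝ} {U : Set (ℝ × ℝ × ℝ)} (hU : IsOpen U)
    (hf : ContDiffOn ℝ (⊤ : ℕ∞) (fun p : ℝ × ℝ × ℝ => f p.1 p.2.1 p.2.2) U)
    {x y t : ℝ} (h : (x, y, t) ∈ U) :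
    HasDerivAt (fun s => f s y t)
      (fderiv ℝ (fun p : ℝ × ℝ × ℝ => f p.1 p.2.1 p.2.2) (x, y, t) (1, 0, 0)) x := by
  have h1 := ((hf.contDiffAt (hU.mem_nhds h)).differentiableAt (by simp)).hasFDerivAt
  have h2 : HasDerivAt (fun s : ℝ => (s, y, t)) (1, 0, 0) x :=
    (hasDerivAt_id x).prodMk ((hasDerivAt_const x y).prodMk (hasDerivAt_const x t))
  exact h1.comp_hasDerivAt x h2

lemma lineY {f : ℝ → ℝ → ℝ → ℝ} {U : Set (ℝ × ℝ × ℝ)} (hU : IsOpen U)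
    (hf : ContDiffOn ℝ (⊤ : ℕ∞) (fun p : ℝ × ℝ × ℝ => f p.1 p.2.1 p.2.2) U)
    {x y t : ℝ} (h : (x, y, t) ∈ U) :
    HasDerivAt (fun s => f x s t)
      (fderiv ℝ (fun p : ℝ × ℝ × ℝ => f p.1 p.2.1 p.2.2) (x, y, t) (0, 1, 0)) y := by
  have h1 := ((hf.contDiffAt (hU.mem_nhds h)).differentiableAt (by simp)).hasFDerivAt
  have h2 : HasDerivAt (fun s : ℝ => (x, s, t)) (0, 1, 0) y :=
    (hasDerivAt_const y x).prodMk ((hasDerivAt_id y).prodMk (hasDerivAt_const y t))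
  exact h1.comp_hasDerivAt y h2

lemma lineT {f : ℝ → ℝ → ℝ → ℝ} {U : Set (ℝ × ℝ × ℝ)} (hU : IsOpen U)
    (hf : ContDiffOn ℝ (⊤ : ℕ∞) (fun p : ℝ × ℝ × ℝ => f p.1 p.2.1 p.2.2) U)
    {x y t : ℝ} (h : (x, y, t) ∈ U) :
    HasDerivAt (fun s => f x y s)
      (fderiv ℝ (fun p : ℝ × ℝ × ℝ => f p.1 p.2.1 p.2.2) (x, y, t) (0, 0, 1)) t := by
  have h1 := ((hf.contDiffAt (hU.mem_nhds h)).differentiableAt (by simp)).hasFDerivAt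
  have h2 : HasDerivAt (fun s : ℝ => (x, y, s)) (0, 0, 1) t :=
    (hasDerivAt_const t x).prodMk ((hasDerivAt_const t y).prodMk (hasDerivAt_id t))
  exact h1.comp_hasDerivAt t h2

lemma dirSmooth {F : ℝ × ℝ × ℝ → ℝ} {U : Set (ℝ × ℝ × ℝ)} (hU : IsOpen U)
    (hF : ContDiffOn ℝ (⊤ : ℕ∞) F U) (e : ℝ × ℝ × ℝ) :
    ContDiffOn ℝ (⊤ : ℕ∞) (fun p => fderiv ℝ F p e) U :=
  (hF.fderiv_of_isOpen hU (by simp)).clm_apply contDiffOn_const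

lemma smoothX {f : ℝ → ℝ → ℝ → ℝ} {U : Set (ℝ × ℝ × ℝ)} (hU : IsOpen U)
    (hf : ContDiffOn ℝ (⊤ : ℕ∞) (fun p : ℝ × ℝ × ℝ => f p.1 p.2.1 p.2.2) U) :
    ContDiffOn ℝ (⊤ : ℕ∞) (fun p : ℝ × ℝ × ℝ => pX f p.1 p.2.1 p.2.2) U :=
  (dirSmooth hU hf (1, 0, 0)).congr fun _ hp => (lineX hU hf hp).deriv

lemma smoothY {f : ℝ → ℝ → ℝ → ℝ} {U : Set (ℝ × ℝ × ℝ)} (hU : IsOpen U)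
    (hf : ContDiffOn ℝ (⊤ : ℕ∞) (fun p : ℝ × ℝ × ℝ => f p.1 p.2.1 p.2.2) U) :
    ContDiffOn ℝ (⊤ : ℕ∞) (fun p : ℝ × ℝ × ℝ => pY f p.1 p.2.1 p.2.2) U :=
  (dirSmooth hU hf (0, 1, 0)).congr fun _ hp => (lineY hU hf hp).deriv

lemma smoothT {f : ℝ → ℝ → ℝ → ℝ} {U : Set (ℝ × ℝ × ℝ)} (hU : IsOpen U)
    (hf : ContDiffOn ℝ (⊤ : ℕ∞) (fun p : ℝ × ℝ × ℝ => f p.1 p.2.1 p.2.2) U) :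
    ContDiffOn ℝ (⊤ : ℕ∞) (fun p : ℝ × ℝ × ℝ => pT f p.1 p.2.1 p.2.2) U :=
  (dirSmooth hU hf (0, 0, 1)).congr fun _ hp => (lineT hU hf hp).deriv

lemma oneD {L c x : ℝ} {g h : ℝ → ℝ} {V : Set ℝ} (hV : IsOpen V)
    (hs : Set.Icc 0 L ⊆ V) (hg : ContinuousOn g V)
    (hh : ∀ s ∈ Set.Icc 0 L, HasDerivAt h (-(g s)) s)
    (hc : c ∈ Set.Icc 0 L) (hx : x ∈ Set.Icc 0 L) (h0 : h c = 0) :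
    h x = -(∫ s in c..x, g s) ∧ HasDerivAt (fun a => ∫ s in c..a, g s) (g x) x := by
  have hsub : Set.uIcc c x ⊆ Set.Icc 0 L := Set.uIcc_subset_Icc hc hx
  have hi : IntervalIntegrable g MeasureTheory.volume c x :=
    (hg.mono (hsub.trans hs)).intervalIntegrable
  refine ⟨?_, ?_⟩
  · have := intervalIntegral.integral_eq_sub_of_hasDerivAt
      (fun s hs' => hh s (hsub hs')) hi.neg
    rw [h0, sub_zero, intervalIntegral.integral_neg] at this
    exact this.symm
  · exact intervalIntegral.integral_hasDerivAt_right hi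
      (hg.stronglyMeasurableAtFilter hV x (hs hx)) (hg.continuousAt (hV.mem_nhds (hs hx)))

/-- Elimination of the Lagrange multipliers in Model II: if the
Model II system holds with `λ₁ = 0` on `{x = Lx}` and `λ₂ = 0` on `{y = 0}`,
then `λ₁ = ∫ₓ^{Lx} u_tt`, `λ₂ = −∫₀^y v_tt`, and `w` satisfies the closed
nonlocal quasilinear equation. -/
theorem modelII_reduction
    (Lx Ly D : ℝ) (hLx : 0 < Lx) (hLy : 0 < Ly) (hD : 0 < D)
    (u v w l1 l2 : ℝ → ℝ → ℝ → ℝ)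
    (U : Set (ℝ × ℝ × ℝ)) (hU : IsOpen U)
    (hsub : Set.Icc (0 : ℝ) Lx ×ˢ Set.Icc (0 : ℝ) Ly ×ˢ (Set.univ : Set ℝ) ⊆ U)
    (hus : ContDiffOn ℝ (⊤ : ℕ∞) (fun p : ℝ × ℝ × ℝ => u p.1 p.2.1 p.2.2) U)
    (hvs : ContDiffOn ℝ (⊤ : ℕ∞) (fun p : ℝ × ℝ × ℝ => v p.1 p.2.1 p.2.2) U)
    (hws : ContDiffOn ℝ (⊤ : ℕ∞) (fun p : ℝ × ℝ × ℝ => w p.1 p.2.1 p.2.2) U)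
    (hl1s : ContDiffOn ℝ (⊤ : ℕ∞) (fun p : ℝ × ℝ × ℝ => l1 p.1 p.2.1 p.2.2) U)
    (hl2s : ContDiffOn ℝ (⊤ : ℕ∞) (fun p : ℝ × ℝ × ℝ => l2 p.1 p.2.1 p.2.2) U)
    (hueq : ∀ x ∈ Set.Icc (0 : ℝ) Lx, ∀ y ∈ Set.Icc (0 : ℝ) Ly, ∀ t : ℝ,
      pT (pT u) x y t + pX l1 x y t = 0)
    (hveq : ∀ x ∈ Set.Icc (0 : ℝ) Lx, ∀ y ∈ Set.Icc (0 : ℝ) Ly, ∀ t : ℝ,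
      pT (pT v) x y t + pY l2 x y t = 0)
    (hweq : ∀ x ∈ Set.Icc (0 : ℝ) Lx, ∀ y ∈ Set.Icc (0 : ℝ) Ly, ∀ t : ℝ,
      pT (pT w) x y t
        + D * (lap (fun a b c => (1 + gradSq w a b c) * lap w a b c) x y t
            - (pX (fun a b c => (lap w a b c) ^ 2 * pX w a b c) x y t
              + pY (fun a b c => (lap w a b c) ^ 2 * pY w a b c) x y t))
        + pX (fun a b c => l1 a b c * pX w a b c) x y t
        + pY (fun a b c => l2 a b c * pY w a b c) x y t = 0)
    (hbc1 : ∀ y ∈ Set.Icc (0 : ℝ) Ly, ∀ t : ℝ, l1 Lx y t = 0)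
    (hbc2 : ∀ x ∈ Set.Icc (0 : ℝ) Lx, ∀ t : ℝ, l2 x 0 t = 0) :
    ∀ x ∈ Set.Icc (0 : ℝ) Lx, ∀ y ∈ Set.Icc (0 : ℝ) Ly, ∀ t : ℝ,
      l1 x y t = (∫ ξ in x..Lx, pT (pT u) ξ y t) ∧
      l2 x y t = -(∫ ζ in (0 : ℝ)..y, pT (pT v) x ζ t) ∧
      pT (pT w) x y t
        + D * lap (fun a b c => (1 + gradSq w a b c) * lap w a b c) x y t
        - D * (pX (fun a b c => (lap w a b c) ^ 2 * pX w a b c) x y t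
            + pY (fun a b c => (lap w a b c) ^ 2 * pY w a b c) x y t)
        + pX (fun a b c => pX w a b c * ∫ ξ in a..Lx, pT (pT u) ξ b c) x y t
        - pY (fun a b c => pY w a b c * ∫ ζ in (0 : ℝ)..b, pT (pT v) a ζ c) x y t
        = 0 := by
  intro x hx y hy t
  have mem : ∀ a ∈ Set.Icc (0 : ℝ) Lx, ∀ b ∈ Set.Icc (0 : ℝ) Ly, (a, b, t) ∈ U :=
    fun a ha b hb => hsub ⟨ha, hb, trivial⟩
  have hcx : Continuous (fun s : ℝ => (s, y, t)) := by fun_prop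
  have hcy : Continuous (fun s : ℝ => (x, s, t)) := by fun_prop
  have hgu : ContinuousOn (fun s => pT (pT u) s y t) ((fun s : ℝ => (s, y, t)) ⁻¹' U) :=
    (smoothT hU (smoothT hU hus)).continuousOn.comp hcx.continuousOn (fun _ h => h)
  have hgv : ContinuousOn (fun s => pT (pT v) x s t) ((fun s : ℝ => (x, s, t)) ⁻¹' U) :=
    (smoothT hU (smoothT hU hvs)).continuousOn.comp hcy.continuousOn (fun _ h => h)
  have hd1 : ∀ s ∈ Set.Icc 0 Lx, HasDerivAt (fun s => l1 s y t) (-(pT (pT u) s y t)) s := by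
    intro s hs
    have h1 := (lineX hU hl1s (mem s hs y hy)).differentiableAt.hasDerivAt
    have h2 := hueq s hs y hy t
    rw [show -(pT (pT u) s y t) = pX l1 s y t by linarith]
    exact h1
  have hd2 : ∀ s ∈ Set.Icc 0 Ly, HasDerivAt (fun s => l2 x s t) (-(pT (pT v) x s t)) s := by
    intro s hs
    have h1 := (lineY hU hl2s (mem x hx s hs)).differentiableAt.hasDerivAt
    have h2 := hveq x hx s hs t
    rw [show -(pT (pT v) x s t) = pY l2 x s t by linarith]
    exact h1
  obtain ⟨e1, i1⟩ := oneD (hU.preimage hcx) (fun s hs => mem s hs y hy) hgu hd1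
    (Set.right_mem_Icc.2 hLx.le) hx (hbc1 y hy t)
  obtain ⟨e2, i2⟩ := oneD (hU.preimage hcy) (fun s hs => mem x hx s hs) hgv hd2
    (Set.left_mem_Icc.2 hLy.le) hy (hbc2 x hx t)
  have hwx := lineX hU (smoothX hU hws) (mem x hx y hy)
  have hwy := lineY hU (smoothY hU hws) (mem x hx y hy)
  have i1' : HasDerivAt (fun a => ∫ ξ in a..Lx, pT (pT u) ξ y t) (-(pT (pT u) x y t)) x := by
    have h := i1.neg
    refine h.congr_of_eventuallyEq (Filter.Eventually.of_forall fun a => ?_)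
    exact intervalIntegral.integral_symm _ _
  have e1' : l1 x y t = ∫ ξ in x..Lx, pT (pT u) ξ y t := by
    rw [intervalIntegral.integral_symm]; exact e1
  have e2' : l2 x y t = -∫ ζ in (0 : ℝ)..y, pT (pT v) x ζ t := e2
  refine ⟨e1', e2', ?_⟩
  have A : pX (fun a b c => pX w a b c * ∫ ξ in a..Lx, pT (pT u) ξ b c) x y t
      = pX (fun a b c => l1 a b c * pX w a b c) x y t := by
    refine (hwx.mul i1').deriv.trans (Eq.trans ?_ ((hd1 x hx).mul hwx).deriv.symm)
    rw [e1']; ring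
  have B : pY (fun a b c => pY w a b c * ∫ ζ in (0 : ℝ)..b, pT (pT v) a ζ c) x y t
      = - pY (fun a b c => l2 a b c * pY w a b c) x y t := by
    refine (hwy.mul i2).deriv.trans
      (Eq.trans ?_ (congrArg Neg.neg ((hd2 y hy).mul hwy).deriv.symm))
    rw [e2']; ring
  rw [A, B]
  linarith [hweq x hx y hy t]
end

section
/- Let L_x, L_y > 0, D > 0, and let u, v, w, λ₁, λ₂, λ₃ : ℝ² × ℝ → ℝ be smooth on a neighborhood of [0, L_x] × [0, L_y] × ℝ. Suppose the Model I system holds at every point: u_tt + ∂_x λ₁ + ∂_y λ₃ = 0; v_tt + ∂_y λ₂ + ∂_x λ₃ = 0; and w_tt + D·Δ[(1 + |∇w|²)Δw] − D·∇·(|Δw|²∇w) + ∂_x(λ₁ w_x) + ∂_y(λ₂ w_y) + ∂_x(λ₃ w_y) + ∂_y(λ₃ w_x) = 0, where ∇ and Δ act in the spatial variables (x, y). Suppose further λ₁(L_x, y, t) = 0 and λ₂(x, L_y, t) = 0 for all admissible (y, t) and (x, t). Then λ₁(x, y, t) = ∫ₓ^{L_x}[u_tt + ∂_y λ₃](ξ,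 y, t) dξ, λ₂(x, y, t) = ∫_y^{L_y}[v_tt + ∂_x λ₃](x, ζ, t) dζ, and w satisfies the reduced equation: w_tt + D·Δ[(1 + |∇w|²)Δw] − D·∇·(|Δw|²∇w) + ∂_x( w_x ∫ₓ^{L_x} u_tt dξ ) + ∂_y( w_y ∫_y^{L_y} v_tt dζ ) + ∂_x( w_x ∫ₓ^{L_x} ∂_y λ₃ dξ ) + ∂_y( w_y ∫_y^{L_y} ∂_x λ₃ dζ ) + ∂_x(λ₃ w_y) + ∂_y(λ₃ w_x) = 0. -/
open Set MeasureTheory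

lemma slice_main (L : ℝ) (W g h l : ℝ → ℝ) (V : Set ℝ) (hV : IsOpen V) (hsub : Icc 0 L ⊆ V)
    (hW : DifferentiableOn ℝ W V) (hg : ContinuousOn g V) (hh : ContinuousOn h V)
    (hl : DifferentiableOn ℝ l V)
    (heq : ∀ x ∈ Icc 0 L, g x + deriv l x + h x = 0) (hL : l L = 0)
    (x : ℝ) (hx : x ∈ Icc 0 L) :
    l x = (∫ s in x..L, (g s + h s)) ∧
    deriv (fun s => W s * ∫ r in s..L, g r) x + deriv (fun s => W s * ∫ r in s..L, h r) x
      = deriv (fun s => l s * W s) x := by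
  have hxV := hsub hx
  have hsub' : uIcc x L ⊆ V := by
    rw [uIcc_of_le hx.2]; exact (Icc_subset_Icc_left hx.1).trans hsub
  have ig : IntervalIntegrable g volume x L := (hg.mono hsub').intervalIntegrable
  have ih : IntervalIntegrable h volume x L := (hh.mono hsub').intervalIntegrable
  have h1 : l x = ∫ s in x..L, (g s + h s) := by
    have := intervalIntegral.integral_eq_sub_of_hasDerivAt (f := l) (f' := fun s => -(g s + h s))
      (a := x) (b := L) (fun s hs => by
        have hd := (hl.differentiableAt (hV.mem_nhds (hsub' hs))).hasDerivAt
        have hs' : s ∈ Icc 0 L := by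
          rw [uIcc_of_le hx.2] at hs; exact Icc_subset_Icc_left hx.1 hs
        have e := heq s hs'
        have : deriv l s = -(g s + h s) := by linarith
        rwa [this] at hd) (ig.add ih).neg
    rw [intervalIntegral.integral_neg, hL] at this
    linarith
  refine ⟨h1, ?_⟩
  have dW := (hW.differentiableAt (hV.mem_nhds hxV)).hasDerivAt
  have dl := (hl.differentiableAt (hV.mem_nhds hxV)).hasDerivAt
  have dg := intervalIntegral.integral_hasDerivAt_left ig
    (hg.stronglyMeasurableAtFilter hV x hxV) (hg.continuousAt (hV.mem_nhds hxV))
  have dh := intervalIntegral.integral_hasDerivAt_left ih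
    (hh.stronglyMeasurableAtFilter hV x hxV) (hh.continuousAt (hV.mem_nhds hxV))
  rw [(dW.fun_mul dg).deriv, (dW.fun_mul dh).deriv, (dl.fun_mul dW).deriv, h1,
    intervalIntegral.integral_add ig ih]
  linear_combination (-W x) * heq x hx

/-- uncurried smoothness -/
def Sm (U : Set (ℝ × ℝ × ℝ)) (f : ℝ → ℝ → ℝ → ℝ) : Prop :=
  ContDiffOn ℝ (⊤ : ℕ∞) (fun p : ℝ × ℝ × ℝ => f p.1 p.2.1 p.2.2) U

lemma Sm.aux {U : Set (ℝ × ℝ × ℝ)} (hU : IsOpen U) {f : ℝ → ℝ → ℝ → ℝ} (hf : Sm U f)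
    (e : ℝ × ℝ × ℝ) : ContDiffOn ℝ (⊤ : ℕ∞)
      (fun p => fderiv ℝ (fun p : ℝ × ℝ × ℝ => f p.1 p.2.1 p.2.2) p e) U :=
  (hf.fderiv_of_isOpen hU (m := ((⊤ : ℕ∞) : WithTop ℕ∞)) (by simp)).clm_apply contDiffOn_const

lemma Sm.dAt {U : Set (ℝ × ℝ × ℝ)} (hU : IsOpen U) {f : ℝ → ℝ → ℝ → ℝ} (hf : Sm U f)
    {p : ℝ × ℝ × ℝ} (hp : p ∈ U) :
    HasFDerivAt (fun p : ℝ × ℝ × ℝ => f p.1 p.2.1 p.2.2)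
      (fderiv ℝ (fun p : ℝ × ℝ × ℝ => f p.1 p.2.1 p.2.2) p) p :=
  ((hf.contDiffAt (hU.mem_nhds hp)).differentiableAt (by simp)).hasFDerivAt

lemma Sm.pX {U : Set (ℝ × ℝ × ℝ)} (hU : IsOpen U) {f : ℝ → ℝ → ℝ → ℝ} (hf : Sm U f) :
    Sm U (pX f) := by
  refine (hf.aux hU (1, 0, 0)).congr ?_
  rintro ⟨x, y, t⟩ hp
  exact ((hf.dAt hU hp).comp_hasDerivAt x
    ((hasDerivAt_id x).prodMk ((hasDerivAt_const x y).prodMk (hasDerivAt_const x t)))).deriv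

lemma Sm.pY {U : Set (ℝ × ℝ × ℝ)} (hU : IsOpen U) {f : ℝ → ℝ → ℝ → ℝ} (hf : Sm U f) :
    Sm U (pY f) := by
  refine (hf.aux hU (0, 1, 0)).congr ?_
  rintro ⟨x, y, t⟩ hp
  exact ((hf.dAt hU hp).comp_hasDerivAt y
    ((hasDerivAt_const y x).prodMk ((hasDerivAt_id y).prodMk (hasDerivAt_const y t)))).deriv

lemma Sm.pT {U : Set (ℝ × ℝ × ℝ)} (hU : IsOpen U) {f : ℝ → ℝ → ℝ → ℝ} (hf : Sm U f) :
    Sm U (pT f) := by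
  refine (hf.aux hU (0, 0, 1)).congr ?_
  rintro ⟨x, y, t⟩ hp
  exact ((hf.dAt hU hp).comp_hasDerivAt t
    ((hasDerivAt_const t x).prodMk ((hasDerivAt_const t y).prodMk (hasDerivAt_id t)))).deriv

lemma Sm.sliceX {U : Set (ℝ × ℝ × ℝ)} {f : ℝ → ℝ → ℝ → ℝ} (hf : Sm U f) (y t : ℝ) :
    DifferentiableOn ℝ (fun s => f s y t) ((fun s : ℝ => (s, y, t)) ⁻¹' U) := by
  have h : DifferentiableOn ℝ (fun p : ℝ × ℝ × ℝ => f p.1 p.2.1 p.2.2) U :=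
    ContDiffOn.differentiableOn hf (by simp)
  exact h.comp (f := fun s : ℝ => (s, y, t))
    (by fun_prop) (fun s hs => hs)

lemma Sm.sliceY {U : Set (ℝ × ℝ × ℝ)} {f : ℝ → ℝ → ℝ → ℝ} (hf : Sm U f) (x t : ℝ) :
    DifferentiableOn ℝ (fun s => f x s t) ((fun s : ℝ => (x, s, t)) ⁻¹' U) := by
  have h : DifferentiableOn ℝ (fun p : ℝ × ℝ × ℝ => f p.1 p.2.1 p.2.2) U :=
    ContDiffOn.differentiableOn hf (by simp)
  exact h.comp (f := fun s : ℝ => (x, s, t))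
    (by fun_prop) (fun s hs => hs)

/-- Partial reduction of Model I: if the Model I system holds with
`λ₁ = 0` on `{x = Lx}` and `λ₂ = 0` on `{y = Ly}`, then `λ₁` and `λ₂` are given
by integrals from the free edges, and `w` satisfies the reduced nonlocal
equation in `w` and the shear multiplier `λ₃`. -/
theorem modelI_reduction
    (Lx Ly D : ℝ) (hLx : 0 < Lx) (hLy : 0 < Ly) (hD : 0 < D)
    (u v w l1 l2 l3 : ℝ → ℝ → ℝ → ℝ)
    (U : Set (ℝ × ℝ × ℝ)) (hU : IsOpen U)
    (hsub : Set.Icc (0 : ℝ) Lx ×ˢ Set.Icc (0 : ℝ) Ly ×ˢ (Set.univ : Set ℝ) ⊆ U)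
    (hus : ContDiffOn ℝ (⊤ : ℕ∞) (fun p : ℝ × ℝ × ℝ => u p.1 p.2.1 p.2.2) U)
    (hvs : ContDiffOn ℝ (⊤ : ℕ∞) (fun p : ℝ × ℝ × ℝ => v p.1 p.2.1 p.2.2) U)
    (hws : ContDiffOn ℝ (⊤ : ℕ∞) (fun p : ℝ × ℝ × ℝ => w p.1 p.2.1 p.2.2) U)
    (hl1s : ContDiffOn ℝ (⊤ : ℕ∞) (fun p : ℝ × ℝ × ℝ => l1 p.1 p.2.1 p.2.2) U)
    (hl2s : ContDiffOn ℝ (⊤ : ℕ∞) (fun p : ℝ × ℝ × ℝ => l2 p.1 p.2.1 p.2.2) U)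
    (hl3s : ContDiffOn ℝ (⊤ : ℕ∞) (fun p : ℝ × ℝ × ℝ => l3 p.1 p.2.1 p.2.2) U)
    (hueq : ∀ x ∈ Set.Icc (0 : ℝ) Lx, ∀ y ∈ Set.Icc (0 : ℝ) Ly, ∀ t : ℝ,
      pT (pT u) x y t + pX l1 x y t + pY l3 x y t = 0)
    (hveq : ∀ x ∈ Set.Icc (0 : ℝ) Lx, ∀ y ∈ Set.Icc (0 : ℝ) Ly, ∀ t : ℝ,
      pT (pT v) x y t + pY l2 x y t + pX l3 x y t = 0)
    (hweq : ∀ x ∈ Set.Icc (0 : ℝ) Lx, ∀ y ∈ Set.Icc (0 : ℝ) Ly, ∀ t : ℝ,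
      pT (pT w) x y t
        + D * lap (fun a b c => (1 + gradSq w a b c) * lap w a b c) x y t
        - D * (pX (fun a b c => (lap w a b c) ^ 2 * pX w a b c) x y t
            + pY (fun a b c => (lap w a b c) ^ 2 * pY w a b c) x y t)
        + pX (fun a b c => l1 a b c * pX w a b c) x y t
        + pY (fun a b c => l2 a b c * pY w a b c) x y t
        + pX (fun a b c => l3 a b c * pY w a b c) x y t
        + pY (fun a b c => l3 a b c * pX w a b c) x y t = 0)
    (hbc1 : ∀ y ∈ Set.Icc (0 : ℝ) Ly, ∀ t : ℝ, l1 Lx y t = 0)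
    (hbc2 : ∀ x ∈ Set.Icc (0 : ℝ) Lx, ∀ t : ℝ, l2 x Ly t = 0) :
    ∀ x ∈ Set.Icc (0 : ℝ) Lx, ∀ y ∈ Set.Icc (0 : ℝ) Ly, ∀ t : ℝ,
      l1 x y t = (∫ ξ in x..Lx, (pT (pT u) ξ y t + pY l3 ξ y t)) ∧
      l2 x y t = (∫ ζ in y..Ly, (pT (pT v) x ζ t + pX l3 x ζ t)) ∧
      pT (pT w) x y t
        + D * lap (fun a b c => (1 + gradSq w a b c) * lap w a b c) x y t
        - D * (pX (fun a b c => (lap w a b c) ^ 2 * pX w a b c) x y t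
            + pY (fun a b c => (lap w a b c) ^ 2 * pY w a b c) x y t)
        + pX (fun a b c => pX w a b c * ∫ ξ in a..Lx, pT (pT u) ξ b c) x y t
        + pY (fun a b c => pY w a b c * ∫ ζ in b..Ly, pT (pT v) a ζ c) x y t
        + pX (fun a b c => pX w a b c * ∫ ξ in a..Lx, pY l3 ξ b c) x y t
        + pY (fun a b c => pY w a b c * ∫ ζ in b..Ly, pX l3 a ζ c) x y t
        + pX (fun a b c => l3 a b c * pY w a b c) x y t
        + pY (fun a b c => l3 a b c * pX w a b c) x y t
        = 0 := by
  intro x hx y hy t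
  have hu : Sm U u := hus
  have hv : Sm U v := hvs
  have hw : Sm U w := hws
  have h1 : Sm U l1 := hl1s
  have h2 : Sm U l2 := hl2s
  have h3 : Sm U l3 := hl3s
  obtain ⟨A1, A2⟩ := slice_main Lx (fun s => pX w s y t) (fun s => pT (pT u) s y t)
    (fun s => pY l3 s y t) (fun s => l1 s y t) ((fun s : ℝ => (s, y, t)) ⁻¹' U)
    (hU.preimage (by fun_prop)) (fun s hs => hsub ⟨hs, hy, trivial⟩)
    ((hw.pX hU).sliceX y t) (((hu.pT hU).pT hU).sliceX y t).continuousOn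
    ((h3.pY hU).sliceX y t).continuousOn (h1.sliceX y t)
    (fun s hs => hueq s hs y hy t) (hbc1 y hy t) x hx
  obtain ⟨B1, B2⟩ := slice_main Ly (fun s => pY w x s t) (fun s => pT (pT v) x s t)
    (fun s => pX l3 x s t) (fun s => l2 x s t) ((fun s : ℝ => (x, s, t)) ⁻¹' U)
    (hU.preimage (by fun_prop)) (fun s hs => hsub ⟨hx, hs, trivial⟩)
    ((hw.pY hU).sliceY x t) (((hv.pT hU).pT hU).sliceY x t).continuousOn
    ((h3.pX hU).sliceY x t).continuousOn (h2.sliceY x t)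
    (fun s hs => hveq x hx s hs t) (hbc2 x hx t) y hy
  refine ⟨A1, B1, ?_⟩
  have A3 : pX (fun a b c => pX w a b c * ∫ ξ in a..Lx, pT (pT u) ξ b c) x y t
      + pX (fun a b c => pX w a b c * ∫ ξ in a..Lx, pY l3 ξ b c) x y t
      = pX (fun a b c => l1 a b c * pX w a b c) x y t := A2
  have B3 : pY (fun a b c => pY w a b c * ∫ ζ in b..Ly, pT (pT v) a ζ c) x y t
      + pY (fun a b c => pY w a b c * ∫ ζ in b..Ly, pX l3 a ζ c) x y t
      = pY (fun a b c => l2 a b c * pY w a b c) x y t := B2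
  linear_combination hweq x hx y hy t + A3 + B3
end
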